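/- arXiv:2508.04439 — 3 statements merged into one kernel-verified Lean document; each statement's English description precedes it below -/
import Mathlib

section
/- Assume ℓ(C) = 2 with f_1 = x and f_2 = y (so e_1 = e_2 = 1 and e_j ≥ 2 for j ≥ 3). Let φ : S^m → S³ be the S-linear map φ(A_1,...,A_{m−1},c) = Σ_{j=1}^{m−1} A_j ρ_j + c σ^z. Then the kernel of φ is a free S-module with basis R_3,...,R_m, where for 3 ≤ j ≤ m−1 the vector R_j ∈ S^m has −x·f_{j,x} in position 1, −y·f_{j,y} in position 2, f_j in position j, zero in the other positions among the first m−1, and −f_{j,z} in the last position, and R_m has −f_m − x·f_{m,x} in position 1, −f_m − y·f_{m,y} in position 2, −f_m in positions 3 through m−1, and −f_{m,z} in the last position. That is, ker φ equals the S-submodule generated by R_3,...,R_m, and R_3,...,R_m are linearly independent over S. -/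
open MvPolynomial

noncomputable abbrev S : Type := MvPolynomial (Fin 3) ℂ

/-- The gradient `∇g = (g_x, g_y, g_z)` of a polynomial `g ∈ S = ℂ[x,y,z]`. -/
noncomputable def grad (g : S) : Fin 3 → S := fun t => pderiv t g

/-- The syzygy triple `ρ_j = Σ_{i≠j} (∏_{k≠i,j} f_k) (∇f_i × ∇f_j)`
of the 2-form `ω_j = df ∧ df_j/f_j`. -/
noncomputable def rho {m : ℕ} (F : Fin m → S) (j : Fin m) : Fin 3 → S :=
  ∑ i ∈ Finset.univ.erase j,
    (∏ k ∈ (Finset.univ.erase j).erase i, F k) • crossProduct (grad (F i)) (grad (F j))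

/-- The Jacobian syzygy module `D₀(f) = {(a,b,c) ∈ S³ : a f_x + b f_y + c f_z = 0}`. -/
noncomputable def D0 (f : S) : Submodule S (Fin 3 → S) where
  carrier := {v | ∑ t, v t * pderiv t f = 0}
  add_mem' {a b} ha hb := by
    simp only [Set.mem_setOf_eq, Pi.add_apply, add_mul, Finset.sum_add_distrib] at *
    rw [ha, hb, add_zero]
  zero_mem' := by simp
  smul_mem' c v hv := by
    simp only [Set.mem_setOf_eq, Pi.smul_apply, smul_eq_mul, mul_assoc, ← Finset.mul_sum] at *
    rw [hv, mul_zero]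

/-- The syzygy triple `σ^x = (0, f_z, −f_y)` of the 2-form `df ∧ dx`. -/
noncomputable def sigx (f : S) : Fin 3 → S := ![0, pderiv 2 f, -pderiv 1 f]
/-- The syzygy triple `σ^y = (−f_z, 0, f_x)` of the 2-form `df ∧ dy`. -/
noncomputable def sigy (f : S) : Fin 3 → S := ![-pderiv 2 f, 0, pderiv 0 f]
/-- The syzygy triple `σ^z = (f_y, −f_x, 0)` of the 2-form `df ∧ dz`. -/
noncomputable def sigz (f : S) : Fin 3 → S := ![pderiv 1 f, -pderiv 0 f, 0]

/-- The second-syzygy vectors `R_3, …, R_m ∈ S^m` (case `ℓ(C) = 2`, `f_1 = x`, `f_2 = y`);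
the index `a : Fin (m−2)` corresponds to `R_{a+3}`. For `3 ≤ j ≤ m−1`, `R_j` has
`−x f_{j,x}` in position 1, `−y f_{j,y}` in position 2, `f_j` in position `j`, zeros
elsewhere among the first `m−1` coordinates and `−f_{j,z}` in the last position; `R_m` has
`−f_m − x f_{m,x}` in position 1, `−f_m − y f_{m,y}` in position 2, `−f_m` in positions
3,…,m−1 and `−f_{m,z}` in the last position. -/
noncomputable def Rvec2 {m : ℕ} (F : Fin m → S) (a : Fin (m - 2)) : (Fin (m - 1) ⊕ Fin 1) → S :=
  let j : Fin m := ⟨(a : ℕ) + 2, by have := a.isLt; omega⟩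
  Sum.elim
    (fun k => (if (k : ℕ) = 0 then -(X 0 * pderiv 0 (F j)) else 0)
      + (if (k : ℕ) = 1 then -(X 1 * pderiv 1 (F j)) else 0)
      + (if (k : ℕ) = (j : ℕ) then F j else 0)
      + (if (j : ℕ) = m - 1 then -F j else 0))
    (fun _ => -pderiv 2 (F j))

/-- A prime polynomial in three variables has a nonzero zero. -/
lemma exists_zero_of_prime {q : S} (hq : Prime q) : ∃ p : Fin 3 → ℂ, p ≠ 0 ∧ eval p q = 0 := by
  by_contra hcon
  push Not at hcon
  have hP : (Ideal.span {q} : Ideal S).IsPrime := (Ideal.span_singleton_prime hq.ne_zero).2 hq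
  have hX : ∀ t : Fin 3, q ∣ (X t : S) := by
    intro t
    rw [← Ideal.mem_span_singleton, ← IsPrime.vanishingIdeal_zeroLocus (K := ℂ) (Ideal.span {q})]
    rw [mem_vanishingIdeal_iff]
    intro x hx
    have h1 : eval x q = 0 := by
      have := hx q (Ideal.mem_span_singleton_self q)
      simpa [coe_aeval_eq_eval] using this
    have h2 : x = 0 := by
      by_contra h
      exact hcon x h h1
    simp [h2]
  have h01 : (X 0 : S) ∣ X 1 := by
    have h0 : Associated q (X 0 : S) :=
      (hq.irreducible.associated_of_dvd (X_prime (R := ℂ) (i := (0 : Fin 3))).irreducible (hX 0))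
    exact h0.symm.dvd.trans (hX 1)
  rw [X_dvd_X] at h01
  exact absurd h01 (by decide)

/-- In a UFD, `a ∣ u_t v` for all `t` gives `a ∣ v` if no prime factor of `a` divides all `u_t`. -/
lemma dvd_of_forall_dvd_mul {ι : Type} (u : ι → S) (a : S) (ha0 : a ≠ 0) :
    (∀ q : S, Prime q → q ∣ a → ∃ t, ¬ q ∣ u t) → ∀ v, (∀ t, a ∣ u t * v) → a ∣ v := by
  revert ha0
  refine UniqueFactorizationMonoid.induction_on_prime a ?_ ?_ ?_
  · intro h; exact absurd rfl h
  · intro x hx _ _ v _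
    exact hx.dvd
  · intro a p ha hp ih _ hu v hv
    obtain ⟨t, ht⟩ := hu p hp (dvd_mul_right _ _)
    have hpv : p ∣ v := (hp.dvd_or_dvd ((dvd_mul_right p a).trans (hv t))).resolve_left ht
    obtain ⟨w, rfl⟩ := hpv
    refine mul_dvd_mul_left p (ih ha (fun q hq hqa => hu q hq (hqa.mul_left p)) w ?_)
    intro s
    have := hv s
    rw [mul_left_comm] at this
    exact (mul_dvd_mul_iff_left hp.ne_zero).1 this

lemma pderiv_prod' {ι : Type} [DecidableEq ι] (s : Finset ι) (F : ι → S) (t : Fin 3) :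
    pderiv t (∏ i ∈ s, F i) = ∑ i ∈ s, (∏ k ∈ s.erase i, F k) * pderiv t (F i) := by
  induction s using Finset.induction_on with
  | empty => simp
  | insert a s ha ih =>
    rw [Finset.prod_insert ha, pderiv_mul, ih, Finset.sum_insert ha, Finset.erase_insert ha,
      Finset.mul_sum]
    congr 1
    · ring
    · refine Finset.sum_congr rfl fun i hi => ?_
      have hia : a ≠ i := by rintro rfl; exact ha hi
      rw [Finset.erase_insert_of_ne hia, Finset.prod_insert (by simp [ha])]
      ring

/-- The cofactor `P_j = ∏_{k ≠ j} f_k`. -/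
noncomputable def cof {m : ℕ} (F : Fin m → S) (j : Fin m) : S := ∏ k ∈ Finset.univ.erase j, F k

lemma mul_cof {m : ℕ} (F : Fin m → S) (j : Fin m) : F j * cof F j = ∏ i, F i :=
  Finset.mul_prod_erase _ _ (Finset.mem_univ j)

lemma grad_prod {m : ℕ} (F : Fin m → S) : grad (∏ i, F i) = ∑ i, cof F i • grad (F i) := by
  funext t
  simp [grad, cof, pderiv_prod', Finset.sum_apply]

lemma dvd_cof {m : ℕ} (F : Fin m → S) {i j : Fin m} (h : i ≠ j) : F j ∣ cof F i :=
  Finset.dvd_prod_of_mem _ (by simp [h.symm])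

lemma mul_rho {m : ℕ} (F : Fin m → S) (j : Fin m) :
    F j • rho F j = crossProduct (grad (∏ i, F i)) (grad (F j)) := by
  rw [grad_prod, map_sum, LinearMap.sum_apply, rho, Finset.smul_sum,
    ← Finset.add_sum_erase _ _ (Finset.mem_univ j)]
  rw [map_smul, LinearMap.smul_apply, cross_self, smul_zero, zero_add]
  refine Finset.sum_congr rfl fun i hi => ?_
  rw [map_smul, LinearMap.smul_apply, smul_smul]
  congr 1
  rw [cof, Finset.erase_right_comm]
  exact Finset.mul_prod_erase _ _ (by simp [Finset.ne_of_mem_erase hi |>.symm])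

lemma sigz_eq (f : S) : sigz f = crossProduct (grad f) ![0, 0, 1] := by
  simp [sigz, cross_apply, grad]

/-- The polynomial 1-form `f η`. -/
noncomputable def Wvec {m : ℕ} (F : Fin m → S) (a : Fin m → S) (c : S) : Fin 3 → S :=
  ∑ j, (a j * cof F j) • grad (F j) + (c * ∏ i, F i) • ![0, 0, 1]

lemma smul_phi {m : ℕ} (F : Fin m → S) (a : Fin m → S) (c : S) :
    (∏ i, F i) • (∑ j, a j • rho F j + c • sigz (∏ i, F i)) =
      crossProduct (grad (∏ i, F i)) (Wvec F a c) := by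
  rw [Wvec, map_add, map_sum, smul_add, Finset.smul_sum, sigz_eq]
  congr 1
  · refine Finset.sum_congr rfl fun j _ => ?_
    rw [map_smul, ← mul_rho, smul_smul, smul_smul, ← mul_cof F j]
    congr 1
    ring
  · rw [map_smul, smul_smul, mul_comm]

lemma Wvec_sub {m : ℕ} (F : Fin m → S) (a B : Fin m → S) (c h : S)
    (hB : ∀ j, a j = h + F j * B j) :
    Wvec F a c = h • grad (∏ i, F i) +
      (∏ i, F i) • (∑ j, B j • grad (F j) + c • ![0, 0, 1]) := by
  rw [Wvec, grad_prod, smul_add, Finset.smul_sum, Finset.smul_sum, ← add_assoc,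
    ← Finset.sum_add_distrib]
  congr 1
  · refine Finset.sum_congr rfl fun j _ => ?_
    rw [smul_smul, smul_smul, ← add_smul, hB j, ← mul_cof F j]
    congr 1
    ring
  · rw [smul_smul, mul_comm]

lemma exists_smul_of_cross_eq_zero (u w : Fin 3 → S) (hu : ∃ t, u t ≠ 0)
    (hprime : ∀ q : S, Prime q → ∃ t, ¬ q ∣ u t) (h : crossProduct u w = 0) :
    ∃ r : S, w = r • u := by
  have hc : ∀ s t, u s * w t = u t * w s := by
    rw [cross_apply] at h
    have h0 := congrFun h 0
    have h1 := congrFun h 1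
    have h2 := congrFun h 2
    simp at h0 h1 h2
    intro s t
    have k1 : u 1 * w 2 = u 2 * w 1 := by linear_combination h0
    have k2 : u 2 * w 0 = u 0 * w 2 := by linear_combination h1
    have k3 : u 0 * w 1 = u 1 * w 0 := by linear_combination h2
    fin_cases s <;> fin_cases t <;> first | rfl | assumption | (symm; assumption)
  obtain ⟨s, hs⟩ := hu
  obtain ⟨r, hr⟩ := dvd_of_forall_dvd_mul u (u s) hs (fun q hq _ => hprime q hq) (w s)
    (fun t => ⟨w t, (hc s t).symm⟩)
  refine ⟨r, ?_⟩
  funext t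
  have := hc s t
  rw [hr] at this
  apply mul_left_cancel₀ hs
  rw [this]
  simp only [Pi.smul_apply, smul_eq_mul]
  ring

section
variable {m : ℕ} (F : Fin m → S)

lemma not_dvd_both
    (hnc : ∀ i j : Fin m, i ≠ j → ∀ p : Fin 3 → ℂ, p ≠ 0 →
      eval p (F i) = 0 → eval p (F j) = 0 →
      LinearIndependent ℂ
        ![fun t => eval p (pderiv t (F i)), fun t => eval p (pderiv t (F j))])
    {i j : Fin m} (hij : i ≠ j) {q : S} (hq : Prime q) (hi : q ∣ F i) (hj : q ∣ F j) : False := by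
  obtain ⟨p, hp, hpq⟩ := exists_zero_of_prime hq
  obtain ⟨a, ha⟩ := hi
  obtain ⟨b, hb⟩ := hj
  have h := hnc i j hij p hp (by rw [ha]; simp [hpq]) (by rw [hb]; simp [hpq])
  have hi' : (fun t => eval p (pderiv t (F i))) = eval p a • fun t => eval p (pderiv t q) := by
    funext t
    simp [ha, pderiv_mul, hpq, mul_comm]
  have hj' : (fun t => eval p (pderiv t (F j))) = eval p b • fun t => eval p (pderiv t q) := by
    funext t
    simp [hb, pderiv_mul, hpq, mul_comm]
  have hne := h.ne_zero 0
  rw [LinearIndependent.pair_iff] at h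
  have h2 := h (eval p b) (-eval p a) (by
    rw [hi', hj', smul_smul, smul_smul, ← add_smul]
    have : eval p b * eval p a + -eval p a * eval p b = 0 := by ring
    rw [this, zero_smul])
  apply hne
  simp only [Matrix.cons_val_zero]
  rw [hi', neg_eq_zero.1 h2.2, zero_smul]

lemma F_ne_zero
    (hsmooth : ∀ j, ∀ p : Fin 3 → ℂ,
      (∀ t, eval p (pderiv t (F j)) = 0) → p = 0)
    (j : Fin m) : F j ≠ 0 := by
  intro h
  have := hsmooth j 1 (by simp [h])
  exact one_ne_zero this

lemma not_dvd_cof_mul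
    (hsmooth : ∀ j, ∀ p : Fin 3 → ℂ,
      (∀ t, eval p (pderiv t (F j)) = 0) → p = 0)
    (hnc : ∀ i j : Fin m, i ≠ j → ∀ p : Fin 3 → ℂ, p ≠ 0 →
      eval p (F i) = 0 → eval p (F j) = 0 →
      LinearIndependent ℂ
        ![fun t => eval p (pderiv t (F i)), fun t => eval p (pderiv t (F j))])
    {j : Fin m} {q : S} (hq : Prime q) (hj : q ∣ F j) :
    ∃ t, ¬ q ∣ cof F j * pderiv t (F j) := by
  by_contra hcon
  push Not at hcon
  have hcof : ¬ q ∣ cof F j := by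
    intro h
    rw [cof, hq.dvd_finsetProd_iff] at h
    obtain ⟨i, hi, hqi⟩ := h
    exact not_dvd_both F hnc (Finset.ne_of_mem_erase hi) hq hqi hj
  obtain ⟨p, hp, hpq⟩ := exists_zero_of_prime hq
  apply hp
  apply hsmooth j
  intro t
  obtain ⟨b, hb⟩ := (hq.dvd_or_dvd (hcon t)).resolve_left hcof
  rw [hb]
  simp [hpq]

lemma not_dvd_grad
    (hsmooth : ∀ j, ∀ p : Fin 3 → ℂ,
      (∀ t, eval p (pderiv t (F j)) = 0) → p = 0)
    (hnc : ∀ i j : Fin m, i ≠ j → ∀ p : Fin 3 → ℂ, p ≠ 0 →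
      eval p (F i) = 0 → eval p (F j) = 0 →
      LinearIndependent ℂ
        ![fun t => eval p (pderiv t (F i)), fun t => eval p (pderiv t (F j))])
    {d : ℕ} (hd : d ≠ 0) (hhom : (∏ i, F i).IsHomogeneous d) {q : S}
    (hq : Prime q) : ∃ t, ¬ q ∣ grad (∏ i, F i) t := by
  by_contra hcon
  push Not at hcon
  have hf : q ∣ ∏ i, F i := by
    have h1 : q ∣ d • ∏ i, F i := by
      rw [← hhom.sum_X_mul_pderiv]
      exact Finset.dvd_sum fun t _ => (hcon t).mul_left _
    have h2 : (∏ i, F i) = C ((d : ℂ)⁻¹) * (d • ∏ i, F i) := by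
      rw [nsmul_eq_mul, ← mul_assoc, ← map_natCast (C : ℂ →+* S), ← map_mul,
        inv_mul_cancel₀ (by exact_mod_cast hd), map_one, one_mul]
    rw [h2]
    exact h1.mul_left _
  rw [hq.dvd_finsetProd_iff] at hf
  obtain ⟨j, _, hj⟩ := hf
  obtain ⟨t, ht⟩ := not_dvd_cof_mul F hsmooth hnc hq hj
  apply ht
  have := hcon t
  rw [grad_prod, Finset.sum_apply, ← Finset.add_sum_erase _ _ (Finset.mem_univ j)] at this
  refine (dvd_add_left ?_).1 this
  refine Finset.dvd_sum fun i hi => ?_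
  exact (hj.trans (dvd_cof F (Finset.ne_of_mem_erase hi))).mul_right _

lemma kernel_iff
    (hsmooth : ∀ j, ∀ p : Fin 3 → ℂ,
      (∀ t, eval p (pderiv t (F j)) = 0) → p = 0)
    (hnc : ∀ i j : Fin m, i ≠ j → ∀ p : Fin 3 → ℂ, p ≠ 0 →
      eval p (F i) = 0 → eval p (F j) = 0 →
      LinearIndependent ℂ
        ![fun t => eval p (pderiv t (F i)), fun t => eval p (pderiv t (F j))])
    {d : ℕ} (hd : d ≠ 0) (hhom : (∏ i, F i).IsHomogeneous d) (a : Fin m → S) (c : S) :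
    ∑ j, a j • rho F j + c • sigz (∏ i, F i) = 0 ↔
    ∃ (h : S) (B : Fin m → S), (∀ j, a j = h + F j * B j) ∧
      ∑ j, B j • grad (F j) + c • ![0, 0, 1] = 0 := by
  have hf0 : (∏ i, F i) ≠ 0 := Finset.prod_ne_zero_iff.2 fun i _ => F_ne_zero F hsmooth i
  constructor
  · intro h0
    have hcr : crossProduct (grad (∏ i, F i)) (Wvec F a c) = 0 := by
      rw [← smul_phi, h0, smul_zero]
    have hu : ∃ t, grad (∏ i, F i) t ≠ 0 := by
      obtain ⟨t, ht⟩ := not_dvd_grad F hsmooth hnc hd hhom (X_prime (R := ℂ) (i := (0 : Fin 3)))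
      exact ⟨t, fun h => ht (h ▸ dvd_zero _)⟩
    obtain ⟨h, hW⟩ := exists_smul_of_cross_eq_zero _ _ hu
      (fun q hq => not_dvd_grad F hsmooth hnc hd hhom hq) hcr
    have hdiv : ∀ j, F j ∣ a j - h := by
      intro j
      refine dvd_of_forall_dvd_mul (fun t => cof F j * pderiv t (F j)) (F j)
        (F_ne_zero F hsmooth j) (fun q hq hqj => not_dvd_cof_mul F hsmooth hnc hq hqj) _ ?_
      intro t
      have ht := congrFun hW t
      rw [Wvec, grad_prod] at ht
      simp only [Pi.add_apply, Finset.sum_apply, Pi.smul_apply, smul_eq_mul, grad] at ht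
      rw [← Finset.add_sum_erase _ _ (Finset.mem_univ j),
        ← Finset.add_sum_erase _ (fun i => cof F i * pderiv t (F i)) (Finset.mem_univ j)]
        at ht
      have e1 : F j ∣ ∑ i ∈ Finset.univ.erase j, a i * cof F i * pderiv t (F i) :=
        Finset.dvd_sum fun i hi =>
          ((dvd_cof F (Finset.ne_of_mem_erase hi)).mul_left _).mul_right _
      have e2 : F j ∣ ∑ i ∈ Finset.univ.erase j, cof F i * pderiv t (F i) :=
        Finset.dvd_sum fun i hi => (dvd_cof F (Finset.ne_of_mem_erase hi)).mul_right _
      have e3 : F j ∣ ∏ i, F i := Finset.dvd_prod_of_mem _ (Finset.mem_univ j)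
      obtain ⟨b1, hb1⟩ := e1
      obtain ⟨b2, hb2⟩ := e2
      obtain ⟨b3, hb3⟩ := e3
      rw [hb1, hb2, hb3] at ht
      refine ⟨h * b2 - b1 - c * b3 * (![0, 0, 1] : Fin 3 → S) t, ?_⟩
      linear_combination ht
    choose B hB using hdiv
    have hB' : ∀ j, a j = h + F j * B j := fun j => by rw [← hB j]; ring
    refine ⟨h, B, hB', ?_⟩
    rw [Wvec_sub F a B c h hB', add_eq_left] at hW
    exact (smul_eq_zero.1 hW).resolve_left hf0
  · rintro ⟨h, B, hB, h0⟩
    have hcr := smul_phi F a c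
    rw [Wvec_sub F a B c h hB, h0, smul_zero, add_zero, map_smul, cross_self, smul_zero] at hcr
    exact (smul_eq_zero.1 hcr).resolve_left hf0

end

/-- Coefficient vector `(B_1, …, B_m)` determined by `(B_3, …, B_m)`. -/
noncomputable def Bvec {n : ℕ} (F : Fin (n + 3) → S) (b : Fin (n + 1) → S) : Fin (n + 3) → S :=
  Fin.cons (-∑ a, b a * pderiv 0 (F a.succ.succ))
    (Fin.cons (-∑ a, b a * pderiv 1 (F a.succ.succ)) b)

lemma Rsum {n : ℕ} (F : Fin (n + 3) → S) (hF1 : F 0 = X 0) (hF2 : F 1 = X 1)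
    (b : Fin (n + 1) → S) :
    (∑ a : Fin (n + 1), b a • Rvec2 (m := n + 3) F a) =
      Sum.elim (fun k : Fin (n + 2) => F k.castSucc * Bvec F b k.castSucc
          - F (Fin.last _) * Bvec F b (Fin.last _))
        (fun _ => -∑ a, b a * pderiv 2 (F a.succ.succ)) := by
  have hlast : ∑ a : Fin (n + 1), b a * (if (a : ℕ) + 2 = n + 2 then -F a.succ.succ else 0) =
      - (F (Fin.last _) * Bvec F b (Fin.last _)) := by
    rw [Finset.sum_eq_single (Fin.last n)]
    · rw [if_pos (by simp), ← Fin.succ_last, ← Fin.succ_last]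
      simp [Bvec]
      ring
    · intro a _ ha
      rw [if_neg, mul_zero]
      intro h
      exact ha (Fin.ext (by simpa using h))
    · simp
  funext k
  rw [Finset.sum_apply]
  rcases k with k | k
  · simp only [Pi.smul_apply, smul_eq_mul, Rvec2, Sum.elim_inl]
    change ∑ a : Fin (n + 1), b a * ((if (k : ℕ) = 0 then -(X 0 * pderiv 0 (F a.succ.succ)) else 0)
      + (if (k : ℕ) = 1 then -(X 1 * pderiv 1 (F a.succ.succ)) else 0)
      + (if (k : ℕ) = (a : ℕ) + 2 then F a.succ.succ else 0)
      + (if (a : ℕ) + 2 = n + 2 then -F a.succ.succ else 0)) = _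
    simp only [mul_add, Finset.sum_add_distrib]
    rw [hlast, sub_eq_add_neg]
    congr 1
    revert k
    intro (k : Fin (n + 2))
    refine Fin.cases ?_ (fun k => ?_) k
    · have h : ∀ a : Fin (n + 1), ¬ (0 = (a : ℕ) + 2) := fun a => by omega
      simp [h, Bvec, hF1, Finset.mul_sum]
      refine Finset.sum_congr rfl fun a _ => by ring
    · refine Fin.cases ?_ (fun k => ?_) k
      · have h : ∀ a : Fin (n + 1), ¬ (1 = (a : ℕ) + 2) := fun a => by omega
        have e : (Fin.castSucc (Fin.succ (0 : Fin (n + 1)))) = Fin.succ 0 := rfl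
        rw [e]
        have e' : F (Fin.succ 0) = X 1 := hF2
        rw [e']
        simp [h, Bvec, Finset.mul_sum]
        refine Finset.sum_congr rfl fun a _ => by ring
      · have e : (Fin.castSucc (Fin.succ (Fin.succ k))) = k.castSucc.succ.succ := rfl
        rw [e, Finset.sum_eq_zero, Finset.sum_eq_zero, zero_add, zero_add,
          Finset.sum_eq_single k.castSucc]
        · simp [Bvec, mul_comm]
        · intro a _ ha
          rw [if_neg, mul_zero]
          intro h
          exact ha (Fin.ext (by simpa using h.symm))
        · simp
        · simp
        · simp
  · simp [Rvec2, Finset.sum_neg_distrib]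
    rfl

lemma Bvec_sum {n : ℕ} (F : Fin (n + 3) → S) (hF1 : F 0 = X 0) (hF2 : F 1 = X 1)
    (b : Fin (n + 1) → S) :
    ∑ j, Bvec F b j • grad (F j) +
      (-∑ a, b a * pderiv 2 (F a.succ.succ)) • (![0, 0, 1] : Fin 3 → S) = 0 := by
  have hF2' : F (Fin.succ 0) = X 1 := hF2
  rw [Fin.sum_univ_succ, Fin.sum_univ_succ, hF1, hF2']
  funext t
  fin_cases t <;>
  simp [Bvec, grad, Finset.sum_apply, pderiv_X]

lemma eq_Bvec {n : ℕ} (F : Fin (n + 3) → S) (hF1 : F 0 = X 0) (hF2 : F 1 = X 1)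
    (B : Fin (n + 3) → S) (c : S) (h : ∑ j, B j • grad (F j) + c • (![0, 0, 1] : Fin 3 → S) = 0) :
    B = Bvec F (fun a => B a.succ.succ) ∧ c = -∑ a : Fin (n + 1), B a.succ.succ * pderiv 2 (F a.succ.succ) := by
  have hF2' : F (Fin.succ 0) = X 1 := hF2
  rw [Fin.sum_univ_succ, Fin.sum_univ_succ, hF1, hF2'] at h
  have h0 := congrFun h 0
  have h1 := congrFun h 1
  have h2 := congrFun h 2
  simp [grad, Finset.sum_apply, pderiv_X] at h0 h1 h2
  constructor
  · funext k
    refine Fin.cases ?_ (fun k => ?_) k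
    · simp [Bvec]
      linear_combination h0
    · refine Fin.cases ?_ (fun k => ?_) k
      · simp [Bvec]
        linear_combination h1
      · simp [Bvec]
  · linear_combination h2

/-- if `ℓ(C) = 2` with `f_1 = x`, `f_2 = y`, the kernel of
`φ : S^m → S³`, `φ(A_1,…,A_{m−1},c) = Σ A_j ρ_j + c σ^z`,
is the free `S`-module with basis `R_3, …, R_m`. -/
theorem kernel_caseL2
    (m : ℕ) (hm : 4 ≤ m) (F : Fin m → S) (e : Fin m → ℕ)
    (he : ∀ j, 1 ≤ e j)
    (hhom : ∀ j, (F j).IsHomogeneous (e j))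
    (hsmooth : ∀ j, ∀ p : Fin 3 → ℂ,
      (∀ t, eval p (pderiv t (F j)) = 0) → p = 0)
    (hnc : ∀ i j : Fin m, i ≠ j → ∀ p : Fin 3 → ℂ, p ≠ 0 →
      eval p (F i) = 0 → eval p (F j) = 0 →
      LinearIndependent ℂ
        ![fun t => eval p (pderiv t (F i)), fun t => eval p (pderiv t (F j))])
    (htriple : ∀ i j k : Fin m, i ≠ j → i ≠ k → j ≠ k → ∀ p : Fin 3 → ℂ, p ≠ 0 →
      ¬(eval p (F i) = 0 ∧ eval p (F j) = 0 ∧ eval p (F k) = 0))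
    (hF1 : F ⟨0, by omega⟩ = X 0) (hF2 : F ⟨1, by omega⟩ = X 1)
    (he1 : e ⟨0, by omega⟩ = 1) (he2 : e ⟨1, by omega⟩ = 1)
    (hl2 : ∀ j : Fin m, 2 ≤ (j : ℕ) → 2 ≤ e j) :
    {A : (Fin (m - 1) ⊕ Fin 1) → S |
        (∑ j : Fin (m - 1), A (Sum.inl j) • rho F (Fin.castLE (Nat.sub_le m 1) j))
          + A (Sum.inr 0) • sigz (∏ i, F i) = 0}
      = (Submodule.span S (Set.range (Rvec2 F)) : Set ((Fin (m - 1) ⊕ Fin 1) → S)) ∧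
    LinearIndependent S (Rvec2 F) := by
  obtain ⟨n, rfl⟩ : ∃ n, m = n + 3 := ⟨m - 3, by omega⟩
  have hF1' : F 0 = X 0 := hF1
  have hF2' : F 1 = X 1 := hF2
  have hfhom : (∏ i, F i).IsHomogeneous (∑ i, e i) :=
    IsHomogeneous.prod _ _ _ fun i _ => hhom i
  have hd : ∑ i, e i ≠ 0 := by
    intro h
    have := Finset.sum_eq_zero_iff.1 h 0 (Finset.mem_univ _)
    have := he 0
    omega
  have hker := kernel_iff F hsmooth hnc hd hfhom
  constructor
  · ext A
    rw [Set.mem_setOf_eq, SetLike.mem_coe, Submodule.mem_span_range_iff_exists_fun]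
    have hext := hker (Fin.snoc (α := fun _ => S) (fun k : Fin (n + 2) => A (Sum.inl k)) 0)
      (A (Sum.inr 0))
    rw [Fin.sum_univ_castSucc] at hext
    simp only [Fin.snoc_castSucc, Fin.snoc_last, zero_smul, add_zero] at hext
    refine Iff.trans (Iff.trans (Iff.of_eq ?_) hext) ?_
    · rfl
    constructor
    · rintro ⟨h, B, hB, h0⟩
      obtain ⟨hBe, hc⟩ := eq_Bvec F hF1' hF2' B _ h0
      refine ⟨fun a : Fin (n + 1) => B (Fin.succ (Fin.succ a)), ?_⟩
      refine (Rsum F hF1' hF2' (fun a : Fin (n + 1) => B (Fin.succ (Fin.succ a)))).trans ?_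
      rw [← hBe]
      have hl := hB (Fin.last _)
      rw [Fin.snoc_last] at hl
      funext k
      rcases k with k | k
      · have hk := hB (Fin.castSucc k)
        rw [Fin.snoc_castSucc] at hk
        simp only [Sum.elim_inl]
        linear_combination hl - hk
      · rw [Subsingleton.elim k 0]
        exact hc.symm
    · rintro ⟨b, hb⟩
      have hb' := (Rsum F hF1' hF2' b).symm.trans hb
      refine ⟨-(F (Fin.last _) * Bvec F b (Fin.last _)), Bvec F b, ?_, ?_⟩
      · intro j
        refine Fin.lastCases ?_ (fun k => ?_) j
        · rw [Fin.snoc_last]; ring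
        · rw [Fin.snoc_castSucc, ← hb']
          simp only [Sum.elim_inl]
          ring
      · rw [← hb']
        exact Bvec_sum F hF1' hF2' b
  · rw [Fintype.linearIndependent_iff]
    intro b hb
    have hb' := (Rsum F hF1' hF2' b).symm.trans hb
    have hc : -∑ a : Fin (n + 1), b a * pderiv 2 (F (Fin.succ (Fin.succ a))) = 0 := congrFun hb' (Sum.inr 0)
    have hall : ∀ j, F j * Bvec F b j = F (Fin.last _) * Bvec F b (Fin.last _) := by
      intro j
      refine Fin.lastCases rfl (fun k => ?_) j
      exact sub_eq_zero.1 (congrFun hb' (Sum.inl k))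
    have hs := Bvec_sum F hF1' hF2' b
    rw [hc, zero_smul, add_zero] at hs
    have hE : ∑ j, (e j : S) * (F j * Bvec F b j) = 0 := by
      have h1 : ∀ j, (e j : S) * (F j * Bvec F b j) =
          ∑ t, X t * (Bvec F b j * pderiv t (F j)) := by
        intro j
        have := (hhom j).sum_X_mul_pderiv
        rw [nsmul_eq_mul] at this
        rw [← mul_assoc, ← this, Finset.sum_mul]
        exact Finset.sum_congr rfl fun t _ => by ring
      simp only [h1]
      rw [Finset.sum_comm]
      refine Finset.sum_eq_zero fun t _ => ?_
      rw [← Finset.mul_sum]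
      have := congrFun hs t
      simp only [Finset.sum_apply, Pi.smul_apply, smul_eq_mul, grad, Pi.zero_apply] at this
      rw [this, mul_zero]
    simp only [hall] at hE
    rw [← Finset.sum_mul, ← Nat.cast_sum] at hE
    have hz := (mul_eq_zero.1 hE).resolve_left (Nat.cast_ne_zero.2 hd)
    intro a
    have ha := hall (Fin.succ (Fin.succ a))
    rw [hz] at ha
    exact (mul_eq_zero.1 ha).resolve_left (F_ne_zero F hsmooth _)
end

section
/- Assume ℓ(C) = 3 with f_1 = x, f_2 = y and f_3 = z (so e_1 = e_2 = e_3 = 1 and e_j ≥ 2 for j ≥ 4). Let φ : S^{m−1} → S³ be the S-linear map φ(A_1,...,A_{m−1}) = Σ_{j=1}^{m−1} A_j ρ_j. Then the kernel of φ is a free S-module with basis R_4,...,R_m, where for 4 ≤ j ≤ m−1 the vector R_j ∈ S^{m−1} has −x·f_{j,x} in position 1, −y·f_{j,y} in position 2, −z·f_{j,z} in position 3, f_j in position j, and zero in the other positions, and R_m has −f_m − x·f_{m,x} in position 1, −f_m − y·f_{m,y} in position 2, −f_m − z·f_{m,z} in position 3, and −f_m in positions 4 through m−1. That is, ker φ equals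 the S-submodule generated by R_4,...,R_m, and R_4,...,R_m are linearly independent over S. -/
open MvPolynomial

/-- The second-syzygy vectors `R_4, …, R_m ∈ S^{m−1}` (case `ℓ(C) = 3`, `f_1 = x`,
`f_2 = y`, `f_3 = z`); the index `a : Fin (m−3)` corresponds to `R_{a+4}`. For
`4 ≤ j ≤ m−1`, `R_j` has `−x f_{j,x}` in position 1, `−y f_{j,y}` in position 2,
`−z f_{j,z}` in position 3, `f_j` in position `j` and zeros elsewhere; `R_m` has
`−f_m − x f_{m,x}`, `−f_m − y f_{m,y}`, `−f_m − z f_{m,z}` in positions 1, 2, 3 and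
`−f_m` in positions 4,…,m−1. -/
noncomputable def Rvec3 {m : ℕ} (F : Fin m → S) (a : Fin (m - 3)) : Fin (m - 1) → S :=
  let j : Fin m := ⟨(a : ℕ) + 3, by have := a.isLt; omega⟩
  fun k => (if (k : ℕ) = 0 then -(X 0 * pderiv 0 (F j)) else 0)
    + (if (k : ℕ) = 1 then -(X 1 * pderiv 1 (F j)) else 0)
    + (if (k : ℕ) = 2 then -(X 2 * pderiv 2 (F j)) else 0)
    + (if (k : ℕ) = (j : ℕ) then F j else 0)
    + (if (j : ℕ) = m - 1 then -F j else 0)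

lemma aux_relPrime_X : IsRelPrime (X 0 : S) (X 1 : S) := by
  have h : Prime (X 0 : S) := MvPolynomial.X_prime
  rw [h.irreducible.isRelPrime_iff_not_dvd, MvPolynomial.X_dvd_X]
  decide

/-- A nonunit of `S` has a nonzero zero. -/
lemma aux_zero (q : S) (hq : ¬ IsUnit q) : ∃ p : Fin 3 → ℂ, p ≠ 0 ∧ eval p q = 0 := by
  by_contra hcon
  push Not at hcon
  have key : ∀ t : Fin 3, ∃ n : ℕ, q ∣ (X t : S) ^ n := by
    intro t
    have h1 : (X t : S) ∈ vanishingIdeal ℂ (zeroLocus ℂ (Ideal.span {q})) := by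
      rw [mem_vanishingIdeal_iff]
      intro p hp
      have h2 : eval p q = 0 := by
        simpa [MvPolynomial.aeval_eq_eval] using hp q (Ideal.subset_span rfl)
      have h3 : p = 0 := by
        by_contra h
        exact hcon p h h2
      simp [h3]
    rw [vanishingIdeal_zeroLocus_eq_radical] at h1
    obtain ⟨n, hn⟩ := h1
    exact ⟨n, Ideal.mem_span_singleton.1 hn⟩
  obtain ⟨n, hn⟩ := key 0
  obtain ⟨k, hk⟩ := key 1
  exact hq ((aux_relPrime_X.pow (m := n) (n := k)) hn hk)

lemma aux_relPrime (f g : S)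
    (hnc : ∀ p : Fin 3 → ℂ, p ≠ 0 → eval p f = 0 → eval p g = 0 →
      LinearIndependent ℂ
        ![fun t => eval p (pderiv t f), fun t => eval p (pderiv t g)]) : IsRelPrime f g := by
  intro q hqf hqg
  by_contra hq
  obtain ⟨p, hp, h0⟩ := aux_zero q hq
  obtain ⟨a, rfl⟩ := hqf
  obtain ⟨b, rfl⟩ := hqg
  have h := hnc p hp (by simp [h0]) (by simp [h0])
  rw [LinearIndependent.pair_iff] at h
  have e1 : ∀ t, eval p (pderiv t (q * a)) = eval p a * eval p (pderiv t q) := by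
    intro t
    simp [Derivation.leibniz, h0]
  have e2 : ∀ t, eval p (pderiv t (q * b)) = eval p b * eval p (pderiv t q) := by
    intro t
    simp [Derivation.leibniz, h0]
  simp only [e1, e2] at h
  have h1 := h (eval p b) (- eval p a) (by ext t; simp; ring)
  have h2 := h 1 0 (by
    have : eval p a = 0 := by simpa using h1.2
    ext t; simp [this])
  simp at h2

lemma aux_dvd (f u : S)
    (hs : ∀ p : Fin 3 → ℂ, (∀ t, eval p (pderiv t f) = 0) → p = 0)
    (h : ∀ t, f ∣ u * pderiv t f) : f ∣ u := by
  let _ : GCDMonoid S := UniqueFactorizationMonoid.toGCDMonoid S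
  set g := gcd (pderiv 0 f) (gcd (pderiv 1 f) (pderiv 2 f)) with hg
  have hgu : IsUnit g := by
    by_contra hq
    obtain ⟨p, hp, h0⟩ := aux_zero g hq
    apply hp
    apply hs
    have hd : ∀ t, g ∣ pderiv t f := by
      intro t
      fin_cases t
      · exact gcd_dvd_left _ _
      · exact (gcd_dvd_right _ _).trans (gcd_dvd_left _ _)
      · exact (gcd_dvd_right _ _).trans (gcd_dvd_right _ _)
    intro t
    obtain ⟨c, hc⟩ := hd t
    rw [hc]; simp [h0]
  have h1 : f ∣ u * gcd (pderiv 1 f) (pderiv 2 f) :=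
    (dvd_gcd (h 1) (h 2)).trans (gcd_mul_left' _ _ _).dvd
  have h2 : f ∣ u * g := (dvd_gcd (h 0) h1).trans (gcd_mul_left' _ _ _).dvd
  exact (hgu.dvd_mul_right).1 h2

/-- Product of all but one. -/
noncomputable def PP {m : ℕ} (F : Fin m → S) (j : Fin m) : S := ∏ k ∈ Finset.univ.erase j, F k

lemma F_mul_PP {m : ℕ} (F : Fin m → S) (j : Fin m) : F j * PP F j = ∏ k, F k :=
  Finset.mul_prod_erase _ _ (Finset.mem_univ j)

lemma F_dvd_PP {m : ℕ} (F : Fin m → S) {i j : Fin m} (h : i ≠ j) : F j ∣ PP F i :=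
  Finset.dvd_prod_of_mem _ (by simp [h.symm])

lemma rho_mul {m : ℕ} (F : Fin m → S) (j : Fin m) :
    F j • rho F j = crossProduct (∑ i, PP F i • grad (F i)) (grad (F j)) := by
  rw [rho, Finset.smul_sum, map_sum, LinearMap.sum_apply,
    ← Finset.add_sum_erase Finset.univ _ (Finset.mem_univ j)]
  simp only [map_smul, LinearMap.smul_apply, cross_self, smul_zero, zero_add]
  refine Finset.sum_congr rfl fun i hi => ?_
  rw [smul_smul]
  congr 1
  rw [PP, Finset.erase_right_comm]
  exact Finset.mul_prod_erase _ _ (by simpa using (Finset.ne_of_mem_erase hi).symm)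

lemma sum_rho {m : ℕ} (F : Fin m → S) (C : Fin m → S) :
    (∏ k, F k) • ∑ j, C j • rho F j =
      crossProduct (∑ i, PP F i • grad (F i)) (∑ j, (C j * PP F j) • grad (F j)) := by
  rw [map_sum, Finset.smul_sum]
  refine Finset.sum_congr rfl fun j _ => ?_
  rw [map_smul, ← rho_mul, ← F_mul_PP F j, smul_smul, smul_smul]
  congr 1
  ring

lemma euler_sum {m : ℕ} (F : Fin m → S) (e : Fin m → ℕ)
    (hhom : ∀ j, (F j).IsHomogeneous (e j)) (C : Fin m → S) :
    ∑ t, X t * (∑ j, (C j * PP F j) • grad (F j)) t = (∑ j, C j * (e j : S)) * ∏ k, F k := by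
  simp only [Finset.sum_apply, Pi.smul_apply, smul_eq_mul, grad, Finset.mul_sum, Finset.sum_mul]
  rw [Finset.sum_comm]
  refine Finset.sum_congr rfl fun j _ => ?_
  have := (hhom j).sum_X_mul_pderiv
  rw [nsmul_eq_mul] at this
  rw [← F_mul_PP F j]
  calc _ = C j * PP F j * ∑ t, X t * pderiv t (F j) := by
        rw [Finset.mul_sum]; exact Finset.sum_congr rfl fun t _ => by ring
    _ = _ := by rw [this]; ring

lemma ker_iff {m : ℕ} (hm : 0 < m) (F : Fin m → S) (e : Fin m → ℕ) (he : ∀ j, 1 ≤ e j)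
    (hhom : ∀ j, (F j).IsHomogeneous (e j)) (h0 : ∀ j, F j ≠ 0) (C : Fin m → S) :
    ∑ j, C j • rho F j = 0 ↔
      ∃ h : S, ∀ t, ∑ j, (C j - h) * PP F j * pderiv t (F j) = 0 := by
  have hf : (∏ k, F k) ≠ 0 := Finset.prod_ne_zero_iff.2 fun k _ => h0 k
  set G := ∑ i, PP F i • grad (F i) with hG
  set W := ∑ j, (C j * PP F j) • grad (F j) with hW
  have hform : ∀ h t, ∑ j, (C j - h) * PP F j * pderiv t (F j) = W t - h * G t := by
    intro h t
    simp only [hG, hW, Finset.sum_apply, Pi.smul_apply, smul_eq_mul, grad, Finset.mul_sum,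
      ← Finset.sum_sub_distrib]
    exact Finset.sum_congr rfl fun j _ => by ring
  have hk : ∑ j, C j • rho F j = 0 ↔ crossProduct G W = 0 := by
    rw [hG, hW, ← sum_rho, smul_eq_zero_iff_right hf]
  rw [hk]
  simp only [hform]
  constructor
  · intro hc
    have hc0 := congrFun hc 0
    have hc1 := congrFun hc 1
    have hc2 := congrFun hc 2
    simp [cross_apply] at hc0 hc1 hc2
    have hEW := euler_sum F e hhom C
    have hEG := euler_sum F e hhom (fun _ => 1)
    simp only [one_mul] at hEG
    rw [← hG] at hEG
    rw [← hW] at hEW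
    have hd : ((∑ j, e j : ℕ) : ℂ) ≠ 0 := by
      rw [Nat.cast_ne_zero]
      have := Finset.single_le_sum (f := e) (fun _ _ => Nat.zero_le _)
        (Finset.mem_univ (⟨0, hm⟩ : Fin m))
      have := he ⟨0, hm⟩
      omega
    set d : ℂ := ((∑ j, e j : ℕ) : ℂ) with hdd
    have hdS : ∑ j, (e j : S) = MvPolynomial.C d := by
      simp [hdd]
    rw [hdS] at hEG
    have hinv : MvPolynomial.C d⁻¹ * MvPolynomial.C d = (1 : S) := by
      rw [← MvPolynomial.C_mul, inv_mul_cancel₀ hd, MvPolynomial.C_1]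
    refine ⟨MvPolynomial.C d⁻¹ * ∑ j, C j * (e j : S), fun t => ?_⟩
    set H := ∑ j, C j * (e j : S)
    have key : G t * (∑ s, X s * W s) = W t * ∑ s, X s * G s := by
      simp only [Fin.sum_univ_three]
      fin_cases t <;> simp
      · linear_combination X 1 * hc2 - X 2 * hc1
      · linear_combination - X 0 * hc2 + X 2 * hc0
      · linear_combination X 0 * hc1 - X 1 * hc0
    rw [hEW, hEG] at key
    have key2 : G t * H = W t * MvPolynomial.C d :=
      mul_right_cancel₀ hf (by linear_combination key)
    linear_combination (-MvPolynomial.C d⁻¹) * key2 - W t * hinv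
  · rintro ⟨h, hh⟩
    have : W = h • G := by
      ext1 t
      simpa using sub_eq_zero.1 (hh t)
    rw [this, map_smul, cross_self, smul_zero]

lemma dvd_of_ker {m : ℕ} (F : Fin m → S)
    (hsmooth : ∀ j, ∀ p : Fin 3 → ℂ,
      (∀ t, eval p (pderiv t (F j)) = 0) → p = 0)
    (hnc : ∀ i j : Fin m, i ≠ j → ∀ p : Fin 3 → ℂ, p ≠ 0 →
      eval p (F i) = 0 → eval p (F j) = 0 →
      LinearIndependent ℂ
        ![fun t => eval p (pderiv t (F i)), fun t => eval p (pderiv t (F j))])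
    (D : Fin m → S) (hD : ∀ t, ∑ j, D j * PP F j * pderiv t (F j) = 0) (j : Fin m) :
    F j ∣ D j := by
  apply aux_dvd _ _ (hsmooth j)
  intro t
  have h1 : F j ∣ D j * PP F j * pderiv t (F j) := by
    have h := hD t
    rw [← Finset.add_sum_erase Finset.univ _ (Finset.mem_univ j)] at h
    rw [eq_neg_of_add_eq_zero_left h, dvd_neg]
    refine Finset.dvd_sum fun i hi => ?_
    exact ((F_dvd_PP F (Finset.ne_of_mem_erase hi)).mul_left _).mul_right _
  have h2 : IsRelPrime (F j) (PP F j) := by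
    refine IsRelPrime.prod_right fun i hi => ?_
    exact aux_relPrime _ _ (hnc j i (Finset.ne_of_mem_erase hi).symm)
  refine h2.dvd_of_dvd_mul_left ?_
  rwa [mul_left_comm, ← mul_assoc]

/-- The index shifted by three. -/
def s3 {n : ℕ} (a : Fin (n + 1)) : Fin (n + 4) := a.succ.succ.succ

def IsRep {n : ℕ} (F C : Fin (n + 4) → S) (h : S) (B : Fin (n + 1) → S) : Prop :=
  (∀ a, C (s3 a) - h = B a * F (s3 a)) ∧
  C 0 - h = -(X 0 * ∑ a, B a * pderiv 0 (F (s3 a))) ∧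
  C 1 - h = -(X 1 * ∑ a, B a * pderiv 1 (F (s3 a))) ∧
  C 2 - h = -(X 2 * ∑ a, B a * pderiv 2 (F (s3 a)))

lemma sum_split {n : ℕ} (g : Fin (n + 4) → S) :
    ∑ j, g j = g 0 + g 1 + g 2 + ∑ a : Fin (n + 1), g (s3 a) := by
  rw [Fin.sum_univ_succ, Fin.sum_univ_succ, Fin.sum_univ_succ, ← add_assoc, ← add_assoc]
  rfl

lemma Rvec3_apply' {n : ℕ} (F : Fin (n + 4) → S) (a : Fin (n + 1)) (k : Fin (n + 3)) :
    Rvec3 F a k = (if (k : ℕ) = 0 then -(X 0 * pderiv 0 (F (s3 a))) else 0)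
    + (if (k : ℕ) = 1 then -(X 1 * pderiv 1 (F (s3 a))) else 0)
    + (if (k : ℕ) = 2 then -(X 2 * pderiv 2 (F (s3 a))) else 0)
    + (if (k : ℕ) = (a : ℕ) + 3 then F (s3 a) else 0)
    + (if a = Fin.last n then -F (s3 a) else 0) := by
  have h : (a = Fin.last n) ↔ (a : ℕ) + 3 = n + 4 - 1 := by
    rw [Fin.ext_iff, Fin.val_last]; omega
  simp only [h]
  rfl

lemma R_sum {n : ℕ} (F : Fin (n + 4) → S) (B : Fin (n + 1) → S) (k : Fin (n + 3)) :
    (∑ a : Fin (n + 1), B a • (Rvec3 F a : Fin (n + 3) → S)) k =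
      (if (k : ℕ) = 0 then -(X 0 * ∑ a, B a * pderiv 0 (F (s3 a))) else 0)
    + (if (k : ℕ) = 1 then -(X 1 * ∑ a, B a * pderiv 1 (F (s3 a))) else 0)
    + (if (k : ℕ) = 2 then -(X 2 * ∑ a, B a * pderiv 2 (F (s3 a))) else 0)
    + (∑ a : Fin (n + 1), if (k : ℕ) = (a : ℕ) + 3 then B a * F (s3 a) else 0)
    - B (Fin.last n) * F (s3 (Fin.last n)) := by
  have h1 : ∀ (t : Fin 3) (P : Prop) [Decidable P],
      (if P then -(X t * ∑ a, B a * pderiv t (F (s3 a))) else 0)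
        = ∑ a, B a * (if P then -(X t * pderiv t (F (s3 a))) else 0) := by
    intro t P _
    split_ifs
    · rw [Finset.mul_sum, ← Finset.sum_neg_distrib]
      exact Finset.sum_congr rfl fun a _ => by ring
    · simp
  have h2 : - (B (Fin.last n) * F (s3 (Fin.last n))) =
      ∑ a, B a * (if a = Fin.last n then -F (s3 a) else 0) := by
    simp
  rw [sub_eq_add_neg, h1, h1, h1, h2, ← Finset.sum_add_distrib, ← Finset.sum_add_distrib,
    ← Finset.sum_add_distrib, ← Finset.sum_add_distrib, Finset.sum_apply]
  refine Finset.sum_congr rfl fun a _ => ?_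
  change B a * (Rvec3 F a : Fin (n + 3) → S) k = _
  rw [Rvec3_apply']
  simp only [mul_add, mul_ite, mul_zero]

lemma rep_iff {n : ℕ} (F : Fin (n + 4) → S) (A : Fin (n + 3) → S) (B : Fin (n + 1) → S) :
    (∑ a : Fin (n + 1), B a • (Rvec3 F a : Fin (n + 3) → S)) = A ↔
      ∃ h, IsRep F (Fin.snoc (α := fun _ => S) A 0) h B := by
  have c0 : (Fin.snoc (α := fun _ => S) A 0 : Fin (n + 4) → S) 0 = A 0 :=
    Fin.snoc_castSucc (α := fun _ => S) 0 A 0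
  have c1 : (Fin.snoc (α := fun _ => S) A 0 : Fin (n + 4) → S) 1 = A 1 :=
    Fin.snoc_castSucc (α := fun _ => S) 0 A 1
  have c2 : (Fin.snoc (α := fun _ => S) A 0 : Fin (n + 4) → S) 2 = A 2 :=
    Fin.snoc_castSucc (α := fun _ => S) 0 A 2
  have cl : (Fin.snoc (α := fun _ => S) A 0 : Fin (n + 4) → S) (s3 (Fin.last n)) = 0 :=
    Fin.snoc_last (α := fun _ => S) 0 A
  have cb : ∀ b : Fin n, (Fin.snoc (α := fun _ => S) A 0 : Fin (n + 4) → S) (s3 b.castSucc)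
      = A b.succ.succ.succ := fun b =>
    Fin.snoc_castSucc (α := fun _ => S) 0 A b.succ.succ.succ
  have r0 := R_sum F B 0
  have r1 := R_sum F B 1
  have r2 := R_sum F B 2
  have rb : ∀ b : Fin n, _ := fun b => R_sum F B b.succ.succ.succ
  have v1 : ((1 : Fin (n + 3)) : ℕ) = 1 := rfl
  have v2 : ((2 : Fin (n + 3)) : ℕ) = 2 := rfl
  have vb : ∀ b : Fin n, ((b.succ.succ.succ : Fin (n + 3)) : ℕ) = b + 3 := fun _ => rfl
  have d1 : ∀ a : ℕ, ¬ (1 = a + 3) := by intro a; omega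
  have d2 : ∀ a : ℕ, ¬ (2 = a + 3) := by intro a; omega
  have d0 : ∀ a : ℕ, ¬ (0 = a + 3) := by intro a; omega
  have v0 : ((0 : Fin (n + 3)) : ℕ) = 0 := rfl
  have n20 : ¬ (2 = 0) := by omega
  have n21 : ¬ (2 = 1) := by omega
  have n10 : ¬ (1 = 0) := by omega
  have n12 : ¬ (1 = 2) := by omega
  have n01 : ¬ (0 = 1) := by omega
  have n02 : ¬ (0 = 2) := by omega
  simp only [v0, d0, n01, n02, if_true, if_false, Finset.sum_const_zero, add_zero] at r0
  simp only [v1, d1, n10, n12, if_true, if_false, Finset.sum_const_zero, add_zero,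
    zero_add] at r1
  simp only [v2, d2, n20, n21, if_true, if_false, Finset.sum_const_zero, add_zero,
    zero_add] at r2
  have rb' : ∀ b : Fin n, (∑ a : Fin (n + 1), B a • (Rvec3 F a : Fin (n + 3) → S))
      b.succ.succ.succ = B b.castSucc * F (s3 b.castSucc)
        - B (Fin.last n) * F (s3 (Fin.last n)) := by
    intro b
    have q0 : ¬ ((b : ℕ) + 3 = 0) := by omega
    have q1 : ¬ ((b : ℕ) + 3 = 1) := by omega
    have q2 : ¬ ((b : ℕ) + 3 = 2) := by omega
    have hs : (∑ a : Fin (n + 1), if (b : ℕ) + 3 = (a : ℕ) + 3 then B a * F (s3 a) else 0)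
        = B b.castSucc * F (s3 b.castSucc) := by
      rw [Finset.sum_eq_single b.castSucc]
      · simp
      · intro a _ ha
        rw [if_neg]
        intro h
        apply ha
        ext
        simp only [Fin.val_castSucc]
        omega
      · simp
    rw [rb b]
    simp only [vb, q0, q1, q2, if_false, hs, zero_add]
  constructor
  · intro hA
    refine ⟨-(B (Fin.last n) * F (s3 (Fin.last n))), ?_, ?_, ?_, ?_⟩
    · intro a
      induction a using Fin.lastCases with
      | last => rw [cl]; ring
      | cast b => rw [cb, ← hA, rb']; ring
    · rw [c0, ← hA, r0]; ring
    · rw [c1, ← hA, r1]; ring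
    · rw [c2, ← hA, r2]; ring
  · rintro ⟨h, h1, h2, h3, h4⟩
    have hl := h1 (Fin.last n)
    rw [cl] at hl
    rw [c0] at h2
    rw [c1] at h3
    rw [c2] at h4
    funext k
    refine Fin.cases ?_ (fun k => Fin.cases ?_ (fun k => Fin.cases ?_ (fun b => ?_) k) k) k
    · refine r0.trans ?_
      linear_combination hl - h2
    · change _ = A 1
      refine r1.trans ?_
      linear_combination hl - h3
    · change _ = A 2
      refine r2.trans ?_
      linear_combination hl - h4
    · rw [rb']
      have := h1 b.castSucc
      rw [cb] at this
      linear_combination hl - this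

lemma ker_sum {n : ℕ} (F C : Fin (n + 4) → S) (hF1 : F 0 = X 0) (hF2 : F 1 = X 1)
    (hF3 : F 2 = X 2) (h : S) (B : Fin (n + 1) → S)
    (hB : ∀ a, C (s3 a) - h = B a * F (s3 a)) (t : Fin 3) :
    ∑ j, (C j - h) * PP F j * pderiv t (F j) =
      (C 0 - h) * PP F 0 * pderiv t (X 0) + (C 1 - h) * PP F 1 * pderiv t (X 1)
      + (C 2 - h) * PP F 2 * pderiv t (X 2)
      + (∏ k, F k) * ∑ a, B a * pderiv t (F (s3 a)) := by
  rw [sum_split, hF1, hF2, hF3, Finset.mul_sum]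
  congr 1
  refine Finset.sum_congr rfl fun a _ => ?_
  rw [hB, ← F_mul_PP F (s3 a)]
  ring

lemma ker_rep {n : ℕ} (F C : Fin (n + 4) → S) (h0 : ∀ j, F j ≠ 0)
    (hF1 : F 0 = X 0) (hF2 : F 1 = X 1) (hF3 : F 2 = X 2)
    (hsmooth : ∀ j, ∀ p : Fin 3 → ℂ,
      (∀ t, eval p (pderiv t (F j)) = 0) → p = 0)
    (hnc : ∀ i j : Fin (n + 4), i ≠ j → ∀ p : Fin 3 → ℂ, p ≠ 0 →
      eval p (F i) = 0 → eval p (F j) = 0 →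
      LinearIndependent ℂ
        ![fun t => eval p (pderiv t (F i)), fun t => eval p (pderiv t (F j))]) (h : S) :
    (∀ t, ∑ j, (C j - h) * PP F j * pderiv t (F j) = 0) ↔ ∃ B, IsRep F C h B := by
  have hP : ∀ j, PP F j ≠ 0 := fun j => Finset.prod_ne_zero_iff.2 fun k _ => h0 k
  have p0 := F_mul_PP F 0
  have p1 := F_mul_PP F 1
  have p2 := F_mul_PP F 2
  rw [hF1] at p0
  rw [hF2] at p1
  rw [hF3] at p2
  constructor
  · intro hD
    have hd := dvd_of_ker F hsmooth hnc (fun j => C j - h) hD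
    have hd' : ∀ a : Fin (n + 1), ∃ b, C (s3 a) - h = b * F (s3 a) := by
      intro a
      obtain ⟨b, hb⟩ := hd (s3 a)
      exact ⟨b, by rw [mul_comm]; exact hb⟩
    choose B hB using hd'
    refine ⟨B, hB, ?_, ?_, ?_⟩
    · have := hD 0
      rw [ker_sum F C hF1 hF2 hF3 h B hB, ← p0] at this
      simp [pderiv_X] at this
      exact mul_right_cancel₀ (hP 0) (by linear_combination this)
    · have := hD 1
      rw [ker_sum F C hF1 hF2 hF3 h B hB, ← p1] at this
      simp [pderiv_X] at this
      exact mul_right_cancel₀ (hP 1) (by linear_combination this)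
    · have := hD 2
      rw [ker_sum F C hF1 hF2 hF3 h B hB, ← p2] at this
      simp [pderiv_X] at this
      exact mul_right_cancel₀ (hP 2) (by linear_combination this)
  · rintro ⟨B, hB, h1, h2, h3⟩ t
    rw [ker_sum F C hF1 hF2 hF3 h B hB, h1, h2, h3]
    fin_cases t
    · rw [← p0]; simp [pderiv_X]; ring
    · rw [← p1]; simp [pderiv_X]; ring
    · rw [← p2]; simp [pderiv_X]; ring

lemma rep_zero {n : ℕ} (F : Fin (n + 4) → S) (e : Fin (n + 4) → ℕ)
    (hhom : ∀ j, (F j).IsHomogeneous (e j)) (h0 : ∀ j, F j ≠ 0)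
    (h : S) (B : Fin (n + 1) → S) (hr : IsRep F 0 h B) : B = 0 := by
  obtain ⟨hB, h1, h2, h3⟩ := hr
  simp only [Pi.zero_apply] at hB h1 h2 h3
  have hE : ∑ t : Fin 3, X t * ∑ a, B a * pderiv t (F (s3 a))
      = - h * ∑ a, (e (s3 a) : S) := by
    simp only [Finset.mul_sum]
    rw [Finset.sum_comm]
    refine Finset.sum_congr rfl fun a _ => ?_
    have := (hhom (s3 a)).sum_X_mul_pderiv
    rw [nsmul_eq_mul] at this
    calc _ = B a * ∑ t, X t * pderiv t (F (s3 a)) := by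
          rw [Finset.mul_sum]; exact Finset.sum_congr rfl fun t _ => by ring
      _ = _ := by rw [this]; linear_combination (-(e (s3 a) : S)) * hB a
  rw [Fin.sum_univ_three] at hE
  have hh : h * ((3 + ∑ a : Fin (n + 1), e (s3 a) : ℕ) : S) = 0 := by
    push_cast
    linear_combination hE - h1 - h2 - h3
  have hz : h = 0 := by
    rcases mul_eq_zero.1 hh with h | h
    · exact h
    · rw [Nat.cast_eq_zero] at h
      omega
  funext a
  have := hB a
  rw [hz, sub_zero] at this
  exact (mul_eq_zero.1 this.symm).resolve_right (h0 _)

/-- if `ℓ(C) = 3` with `f_1 = x`, `f_2 = y`, `f_3 = z`, the kernel of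
`φ : S^{m−1} → S³`, `φ(A_1,…,A_{m−1}) = Σ A_j ρ_j`,
is the free `S`-module with basis `R_4, …, R_m`. -/
theorem kernel_caseL3
    (m : ℕ) (hm : 4 ≤ m) (F : Fin m → S) (e : Fin m → ℕ)
    (he : ∀ j, 1 ≤ e j)
    (hhom : ∀ j, (F j).IsHomogeneous (e j))
    (hsmooth : ∀ j, ∀ p : Fin 3 → ℂ,
      (∀ t, eval p (pderiv t (F j)) = 0) → p = 0)
    (hnc : ∀ i j : Fin m, i ≠ j → ∀ p : Fin 3 → ℂ, p ≠ 0 →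
      eval p (F i) = 0 → eval p (F j) = 0 →
      LinearIndependent ℂ
        ![fun t => eval p (pderiv t (F i)), fun t => eval p (pderiv t (F j))])
    (htriple : ∀ i j k : Fin m, i ≠ j → i ≠ k → j ≠ k → ∀ p : Fin 3 → ℂ, p ≠ 0 →
      ¬(eval p (F i) = 0 ∧ eval p (F j) = 0 ∧ eval p (F k) = 0))
    (hF1 : F ⟨0, by omega⟩ = X 0) (hF2 : F ⟨1, by omega⟩ = X 1) (hF3 : F ⟨2, by omega⟩ = X 2)
    (he1 : e ⟨0, by omega⟩ = 1) (he2 : e ⟨1, by omega⟩ = 1) (he3 : e ⟨2, by omega⟩ = 1)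
    (hl3 : ∀ j : Fin m, 3 ≤ (j : ℕ) → 2 ≤ e j) :
    {A : Fin (m - 1) → S |
        ∑ j : Fin (m - 1), A j • rho F (Fin.castLE (Nat.sub_le m 1) j) = 0}
      = (Submodule.span S (Set.range (Rvec3 F)) : Set (Fin (m - 1) → S)) ∧
    LinearIndependent S (Rvec3 F) := by
  have h0 : ∀ j, F j ≠ 0 := by
    intro j hj
    have := hsmooth j (fun _ => 1) (by simp [hj])
    exact one_ne_zero (congrFun this 0)
  obtain ⟨n, rfl⟩ : ∃ n, m = n + 4 := ⟨m - 4, by omega⟩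
  have hR : ∀ B : Fin (n + 1) → S,
      (∑ a : Fin (n + 4 - 3), B a • Rvec3 F a : Fin (n + 4 - 1) → S) =
      (∑ a : Fin (n + 1), B a • (Rvec3 F a : Fin (n + 3) → S)) := fun _ => rfl
  refine ⟨?_, ?_⟩
  · ext A
    have e1 : ∑ j : Fin (n + 4 - 1), A j • rho F (Fin.castLE (Nat.sub_le (n + 4) 1) j) =
        ∑ j : Fin (n + 4), (Fin.snoc (α := fun _ => S) A 0 : Fin (n + 4) → S) j • rho F j := by
      rw [Fin.sum_univ_castSucc]
      simp only [Fin.snoc_castSucc, Fin.snoc_last, zero_smul, add_zero]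
      rfl
    have e2 : A ∈ {A : Fin (n + 4 - 1) → S |
        ∑ j : Fin (n + 4 - 1), A j • rho F (Fin.castLE (Nat.sub_le (n + 4) 1) j) = 0} ↔
        ∑ j : Fin (n + 4 - 1), A j • rho F (Fin.castLE (Nat.sub_le (n + 4) 1) j) = 0 := Iff.rfl
    rw [e2, e1, ker_iff (by omega) F e he hhom h0, SetLike.mem_coe,
      Submodule.mem_span_range_iff_exists_fun]
    have e3 : (∃ c : Fin (n + 4 - 3) → S, ∑ i, c i • Rvec3 F i = A) ↔
        ∃ B : Fin (n + 1) → S, ∃ h, IsRep F (Fin.snoc (α := fun _ => S) A 0) h B :=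
      exists_congr fun B => rep_iff F A B
    rw [e3, exists_comm]
    exact exists_congr fun h => ker_rep F _ h0 hF1 hF2 hF3 hsmooth hnc h
  · rw [Fintype.linearIndependent_iff]
    intro B hB
    obtain ⟨h, hr⟩ := (rep_iff F 0 B).1 hB
    have hz : (Fin.snoc (α := fun _ => S) (0 : Fin (n + 3) → S) 0 : Fin (n + 4) → S) = 0 := by
      funext j
      induction j using Fin.lastCases with
      | last => simp
      | cast j => simp
    rw [hz] at hr
    have := rep_zero F e hhom h0 h B hr
    intro i
    exact congrFun this i
end

section
/- If (a,b,c) ∈ D₀(f) has components a, b, c homogeneous of the same degree j with j < d−2, then (a,b,c) = (0,0,0); that is, the Jacobian syzygy module D₀(f) vanishes in all degrees below d−2. -/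
open MvPolynomial

/-! ### Koszul-type lemmas -/

/-- `a, b, c` behaves like a regular sequence. -/
structure RegTriple {R : Type*} [CommRing R] (a b c : R) : Prop where
  ne : a ≠ 0
  ab : ∀ s, a ∣ b * s → a ∣ s
  abc : ∀ s u v, c * s = a * u + b * v → ∃ u' v', s = a * u' + b * v'

section koszul

variable {R : Type*} [CommRing R] [IsDomain R]

theorem koszul_two {a b c : R} (hr : RegTriple a b c) {g1 g2 g3 : R}
    {α1 α2 α3 β1 β2 β3 : R}
    (ha : a = α1 * g1 + α2 * g2 + α3 * g3)
    (hb : b = β1 * g1 + β2 * g2 + β3 * g3)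
    {n1 n2 n3 : R} (h1 : n2 * g3 = n3 * g2) (h2 : n3 * g1 = n1 * g3) (h3 : n1 * g2 = n2 * g1) :
    ∃ s, n1 = s * g1 ∧ n2 = s * g2 ∧ n3 = s * g3 := by
  obtain ⟨s, hs⟩ : ∃ s, s = α1 * n1 + α2 * n2 + α3 * n3 := ⟨_, rfl⟩
  obtain ⟨t, ht⟩ : ∃ t, t = β1 * n1 + β2 * n2 + β3 * n3 := ⟨_, rfl⟩
  have A1 : a * n1 = s * g1 := by
    rw [ha, hs]; linear_combination α2 * h3 - α3 * h2
  have A2 : a * n2 = s * g2 := by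
    rw [ha, hs]; linear_combination -α1 * h3 + α3 * h1
  have A3 : a * n3 = s * g3 := by
    rw [ha, hs]; linear_combination α1 * h2 - α2 * h1
  have B1 : b * n1 = t * g1 := by
    rw [hb, ht]; linear_combination β2 * h3 - β3 * h2
  have B2 : b * n2 = t * g2 := by
    rw [hb, ht]; linear_combination -β1 * h3 + β3 * h1
  have B3 : b * n3 = t * g3 := by
    rw [hb, ht]; linear_combination β1 * h2 - β2 * h1
  have hz : a * (b * s - a * t) = 0 := by
    linear_combination (b * s - a * t) * ha + α1 * (a * B1 - b * A1) + α2 * (a * B2 - b * A2)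
      + α3 * (a * B3 - b * A3)
  have hst : b * s = a * t := by
    have := (mul_eq_zero.mp hz).resolve_left hr.ne
    linear_combination this
  obtain ⟨s', hs'⟩ := hr.ab s ⟨t, hst⟩
  refine ⟨s', ?_, ?_, ?_⟩ <;> apply mul_left_cancel₀ hr.ne
  · linear_combination A1 + g1 * hs'
  · linear_combination A2 + g2 * hs'
  · linear_combination A3 + g3 * hs'

theorem koszul_two_mod {a b c : R} (hr : RegTriple a b c) {g1 g2 g3 : R}
    {γ1 γ2 γ3 β1 β2 β3 : R}
    (hb : b = β1 * g1 + β2 * g2 + β3 * g3)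
    (hc : c = γ1 * g1 + γ2 * g2 + γ3 * g3)
    {n1 n2 n3 k1 k2 k3 : R} (h1 : n2 * g3 - n3 * g2 = a * k1) (h2 : n3 * g1 - n1 * g3 = a * k2)
    (h3 : n1 * g2 - n2 * g1 = a * k3) :
    ∃ s x1 x2 x3, n1 = s * g1 + a * x1 ∧ n2 = s * g2 + a * x2 ∧ n3 = s * g3 + a * x3 := by
  obtain ⟨s, hs⟩ : ∃ s, s = β1 * n1 + β2 * n2 + β3 * n3 := ⟨_, rfl⟩
  obtain ⟨t, ht⟩ : ∃ t, t = γ1 * n1 + γ2 * n2 + γ3 * n3 := ⟨_, rfl⟩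
  have B1 : b * n1 = s * g1 + a * (β2 * k3 - β3 * k2) := by
    rw [hb, hs]; linear_combination β2 * h3 - β3 * h2
  have B2 : b * n2 = s * g2 + a * (-β1 * k3 + β3 * k1) := by
    rw [hb, hs]; linear_combination -β1 * h3 + β3 * h1
  have B3 : b * n3 = s * g3 + a * (β1 * k2 - β2 * k1) := by
    rw [hb, hs]; linear_combination β1 * h2 - β2 * h1
  have C1 : c * n1 = t * g1 + a * (γ2 * k3 - γ3 * k2) := by
    rw [hc, ht]; linear_combination γ2 * h3 - γ3 * h2
  have C2 : c * n2 = t * g2 + a * (-γ1 * k3 + γ3 * k1) := by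
    rw [hc, ht]; linear_combination -γ1 * h3 + γ3 * h1
  have C3 : c * n3 = t * g3 + a * (γ1 * k2 - γ2 * k1) := by
    rw [hc, ht]; linear_combination γ1 * h2 - γ2 * h1
  have hz : a ∣ b * (c * s - b * t) := by
    refine ⟨β1 * (b * (γ2 * k3 - γ3 * k2) - c * (β2 * k3 - β3 * k2))
      + β2 * (b * (-γ1 * k3 + γ3 * k1) - c * (-β1 * k3 + β3 * k1))
      + β3 * (b * (γ1 * k2 - γ2 * k1) - c * (β1 * k2 - β2 * k1)), ?_⟩
    linear_combination (c * s - b * t) * hb + β1 * (b * C1 - c * B1) + β2 * (b * C2 - c * B2)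
      + β3 * (b * C3 - c * B3)
  obtain ⟨w, hw⟩ := hr.ab _ hz
  obtain ⟨u, v, huv⟩ := hr.abc s w t (by linear_combination hw)
  obtain ⟨x1, hx1⟩ := hr.ab (n1 - v * g1) ⟨u * g1 + (β2 * k3 - β3 * k2), by
    linear_combination B1 + g1 * huv⟩
  obtain ⟨x2, hx2⟩ := hr.ab (n2 - v * g2) ⟨u * g2 + (-β1 * k3 + β3 * k1), by
    linear_combination B2 + g2 * huv⟩
  obtain ⟨x3, hx3⟩ := hr.ab (n3 - v * g3) ⟨u * g3 + (β1 * k2 - β2 * k1), by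
    linear_combination B3 + g3 * huv⟩
  exact ⟨v, x1, x2, x3, by linear_combination hx1, by linear_combination hx2,
    by linear_combination hx3⟩

theorem koszul_one {a b c : R} (hr : RegTriple a b c) {g1 g2 g3 : R}
    {α1 α2 α3 γ1 γ2 γ3 β1 β2 β3 : R}
    (ha : a = α1 * g1 + α2 * g2 + α3 * g3)
    (hb : b = β1 * g1 + β2 * g2 + β3 * g3)
    (hc : c = γ1 * g1 + γ2 * g2 + γ3 * g3)
    {n1 n2 n3 : R} (h : n1 * g1 + n2 * g2 + n3 * g3 = 0) :
    ∃ x1 x2 x3, n1 = g2 * x3 - g3 * x2 ∧ n2 = g3 * x1 - g1 * x3 ∧ n3 = g1 * x2 - g2 * x1 := by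
  obtain ⟨z1, hz1⟩ : ∃ z, z = n2 * α3 - n3 * α2 := ⟨_, rfl⟩
  obtain ⟨z2, hz2⟩ : ∃ z, z = n3 * α1 - n1 * α3 := ⟨_, rfl⟩
  obtain ⟨z3, hz3⟩ : ∃ z, z = n1 * α2 - n2 * α1 := ⟨_, rfl⟩
  have A1 : a * n1 = g2 * z3 - g3 * z2 := by
    rw [ha, hz2, hz3]; linear_combination α1 * h
  have A2 : a * n2 = g3 * z1 - g1 * z3 := by
    rw [ha, hz1, hz3]; linear_combination α2 * h
  have A3 : a * n3 = g1 * z2 - g2 * z1 := by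
    rw [ha, hz2, hz1]; linear_combination α3 * h
  obtain ⟨s, x1, x2, x3, e1, e2, e3⟩ := koszul_two_mod hr hb hc (n1 := z1) (n2 := z2) (n3 := z3)
    (k1 := -n1) (k2 := -n2) (k3 := -n3)
    (by linear_combination A1) (by linear_combination A2) (by linear_combination A3)
  refine ⟨x1, x2, x3, ?_, ?_, ?_⟩ <;> apply mul_left_cancel₀ hr.ne
  · linear_combination A1 + g2 * e3 - g3 * e2
  · linear_combination A2 + g3 * e1 - g1 * e3
  · linear_combination A3 + g1 * e2 - g2 * e1

/-- Saturation: a complete intersection of two coprime elements has no component supported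
at the zero set of a regular triple. -/
theorem saturated {a b c : R} (hr : RegTriple a b c) {f g h : R} (hg0 : g ≠ 0)
    (hfg : ∀ s, g ∣ f * s → g ∣ s)
    {u1 u2 u3 v1 v2 v3 : R}
    (h1 : a * h = u1 * f + v1 * g) (h2 : b * h = u2 * f + v2 * g) (h3 : c * h = u3 * f + v3 * g) :
    ∃ s t, h = s * f + t * g := by
  have key : ∀ p q : R, p * f + q * g = 0 → ∃ w, p = w * g ∧ q = - w * f := by
    intro p q hpq
    obtain ⟨w, hw⟩ := hfg p ⟨-q, by linear_combination hpq⟩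
    refine ⟨w, by rw [hw]; ring, ?_⟩
    apply mul_left_cancel₀ hg0
    linear_combination hpq - f * hw
  obtain ⟨w1, p1, q1⟩ := key (b * u3 - c * u2) (b * v3 - c * v2) (by
    linear_combination c * h2 - b * h3)
  obtain ⟨w2, p2, q2⟩ := key (c * u1 - a * u3) (c * v1 - a * v3) (by
    linear_combination a * h3 - c * h1)
  obtain ⟨w3, p3, q3⟩ := key (a * u2 - b * u1) (a * v2 - b * v1) (by
    linear_combination b * h1 - a * h2)
  have ha : a = 1 * a + 0 * b + 0 * c := by ring
  have hb : b = 0 * a + 1 * b + 0 * c := by ring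
  have hc : c = 0 * a + 0 * b + 1 * c := by ring
  obtain ⟨x1, x2, x3, e1, e2, e3⟩ := koszul_one hr ha hb hc (n1 := w1) (n2 := w2) (n3 := w3) (by
    apply mul_left_cancel₀ hg0
    linear_combination -a * p1 - b * p2 - c * p3)
  obtain ⟨s, s1, s2, s3⟩ := koszul_two hr ha hb (n1 := u1 - g * x1) (n2 := u2 - g * x2)
    (n3 := u3 - g * x3) (by linear_combination -p1 - g * e1) (by linear_combination -p2 - g * e2)
    (by linear_combination -p3 - g * e3)
  obtain ⟨t, t1, t2, t3⟩ := koszul_two hr ha hb (n1 := v1 + f * x1) (n2 := v2 + f * x2)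
    (n3 := v3 + f * x3) (by linear_combination -q1 + f * e1) (by linear_combination -q2 + f * e2)
    (by linear_combination -q3 + f * e3)
  refine ⟨s, t, ?_⟩
  apply mul_left_cancel₀ hr.ne
  linear_combination h1 + f * s1 + g * t1

end koszul
/-! ### Powers of the variables -/

theorem X_relPrime {i j : Fin 3} (hij : i ≠ j) (N : ℕ) : IsRelPrime ((X i : S) ^ N) ((X j : S) ^ N) := by
  apply IsRelPrime.pow
  have hi : Irreducible (X i : S) := (X_prime).irreducible
  rw [hi.isRelPrime_iff_not_dvd, X_dvd_X]
  exact hij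

theorem regTriple_X (N : ℕ) : RegTriple ((X 0 : S) ^ N) ((X 1 : S) ^ N) ((X 2 : S) ^ N) where
  ne := pow_ne_zero _ (X_ne_zero _)
  ab s h := (X_relPrime (by decide) N).dvd_of_dvd_mul_left h
  abc s u v h := by
    have key : ∀ x : S, x ∈ Ideal.span {(X 0 : S) ^ N, (X 1 : S) ^ N} ↔
        ∀ m ∈ x.support, N ≤ m 0 ∨ N ≤ m 1 := by
      intro x
      have : ({(X 0 : S) ^ N, (X 1 : S) ^ N} : Set S) =
          (fun s => monomial s (1 : ℂ)) '' {Finsupp.single 0 N, Finsupp.single 1 N} := by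
        rw [Set.image_pair, X_pow_eq_monomial, X_pow_eq_monomial]
      rw [this, mem_ideal_span_monomial_image]
      simp
    have h1 : X 2 ^ N * s ∈ Ideal.span {(X 0 : S) ^ N, (X 1 : S) ^ N} := by
      rw [Ideal.mem_span_pair]; exact ⟨u, v, by rw [h]; ring⟩
    have h2 : s ∈ Ideal.span {(X 0 : S) ^ N, (X 1 : S) ^ N} := by
      rw [key] at h1 ⊢
      intro m hm
      have := h1 (Finsupp.single 2 N + m) (by
        rw [mem_support_iff, X_pow_eq_monomial, coeff_monomial_mul, one_mul]
        exact mem_support_iff.mp hm)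
      simpa using this
    rw [Ideal.mem_span_pair] at h2
    obtain ⟨p, q, hpq⟩ := h2
    exact ⟨p, q, by rw [← hpq]; ring⟩

theorem X_pow_mem (I : Ideal S) (h : ∀ p : Fin 3 → ℂ, p ≠ 0 → ∃ g ∈ I, eval p g ≠ 0) :
    ∃ N : ℕ, ∀ i, (X i : S) ^ N ∈ I := by
  have h1 : ∀ i, ∃ n : ℕ, (X i : S) ^ n ∈ I := by
    intro i
    have : (X i : S) ∈ vanishingIdeal ℂ (zeroLocus ℂ I) := by
      rw [mem_vanishingIdeal_iff]
      intro p hp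
      have : p = 0 := by
        by_contra hp0
        obtain ⟨g, hg, hne⟩ := h p hp0
        have := (mem_zeroLocus_iff.mp hp) g hg
        exact hne (by simpa [aeval_eq_eval] using this)
      simp [this]
    rw [vanishingIdeal_zeroLocus_eq_radical] at this
    exact this
  choose n hn using h1
  refine ⟨∑ i, n i, fun i => ?_⟩
  exact Ideal.mem_of_dvd I (pow_dvd_pow _ (Finset.single_le_sum (fun _ _ => Nat.zero_le _) (Finset.mem_univ i))) (hn i)

attribute [local instance] MvPolynomial.gradedAlgebra

/-- Homogeneity argument. -/
theorem dvd_of_low_degree {n k l : ℕ} {h f q u r : S} (hh : h.IsHomogeneous n)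
    (hf : f.IsHomogeneous k) (hq : q.IsHomogeneous l) (hl : n < l) (e : h = q * u + f * r) :
    f ∣ h := by
  have e1 := congrArg (fun x => ((DirectSum.decompose (homogeneousSubmodule (Fin 3) ℂ) x) n : S)) e
  simp only [DirectSum.decompose_add, DirectSum.add_apply, Submodule.coe_add] at e1
  rw [DirectSum.coe_decompose_mul_of_left_mem_of_not_le _
    ((mem_homogeneousSubmodule _ _).mpr hq) (by omega), zero_add,
    DirectSum.decompose_of_mem_same _ ((mem_homogeneousSubmodule _ _).mpr hh)] at e1
  by_cases hkn : k ≤ n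
  · rw [DirectSum.coe_decompose_mul_of_left_mem_of_le _
      ((mem_homogeneousSubmodule _ _).mpr hf) hkn] at e1
    exact ⟨_, e1⟩
  · rw [DirectSum.coe_decompose_mul_of_left_mem_of_not_le _
      ((mem_homogeneousSubmodule _ _).mpr hf) hkn] at e1
    rw [e1]; exact dvd_zero _

theorem eq_zero_of_dvd_low {n l : ℕ} {h f : S} (hh : h.IsHomogeneous n) (hf : f.IsHomogeneous l)
    (hl : n < l) (hd : f ∣ h) : h = 0 := by
  obtain ⟨r, hr⟩ := hd
  have := dvd_of_low_degree (f := 0) (k := 0) (r := 0) (u := r) hh (isHomogeneous_zero _ _ _) hf hl (by rw [hr]; ring)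
  exact zero_dvd_iff.mp this

/-! ### Geometric consequences -/

/-- An ideal `(f, g)` with `f, g` coprime is saturated. -/
theorem mem_span_pair_of_local {f g h : S} (hg0 : g ≠ 0) (hfg : IsRelPrime f g)
    (H : ∀ p : Fin 3 → ℂ, p ≠ 0 → ∃ x : S, x * h ∈ Ideal.span {f, g} ∧ eval p x ≠ 0) :
    h ∈ Ideal.span {f, g} := by
  obtain ⟨N, hN⟩ := X_pow_mem ((Ideal.span {f, g}).colon {h}) (by
    intro p hp
    obtain ⟨x, hx, hx'⟩ := H p hp
    exact ⟨x, by rw [Submodule.mem_colon_singleton]; exact hx, hx'⟩)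
  have hN' : ∀ i, ∃ u v, (X i : S) ^ N * h = u * f + v * g := by
    intro i
    have := hN i
    rw [Submodule.mem_colon_singleton, smul_eq_mul, Ideal.mem_span_pair] at this
    obtain ⟨u, v, huv⟩ := this
    exact ⟨u, v, huv.symm⟩
  obtain ⟨u1, v1, h1⟩ := hN' 0
  obtain ⟨u2, v2, h2⟩ := hN' 1
  obtain ⟨u3, v3, h3⟩ := hN' 2
  obtain ⟨s, t, hst⟩ := saturated (regTriple_X N) hg0
    (fun s hs => hfg.symm.dvd_of_dvd_mul_left hs) h1 h2 h3
  rw [Ideal.mem_span_pair]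
  exact ⟨s, t, hst.symm⟩

theorem relPrime_of_transversal {f g : S}
    (H : ∀ p : Fin 3 → ℂ, p ≠ 0 → eval p f = 0 → eval p g = 0 →
      LinearIndependent ℂ ![fun t => eval p (pderiv t f), fun t => eval p (pderiv t g)]) :
    IsRelPrime f g := by
  rintro d ⟨u, hu⟩ ⟨v, hv⟩
  obtain ⟨N, hN⟩ := X_pow_mem (Ideal.span {d}) (by
    intro p hp
    refine ⟨d, Ideal.mem_span_singleton_self d, fun hd => ?_⟩
    have hl := H p hp (by rw [hu, map_mul, hd, zero_mul]) (by rw [hv, map_mul, hd, zero_mul])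
    have h0 := hl.ne_zero 0
    rw [LinearIndependent.pair_iff] at hl
    have hf : ∀ t, eval p (pderiv t f) = eval p u * eval p (pderiv t d) := by
      intro t; rw [hu, Derivation.leibniz]; simp [hd]
    have hg : ∀ t, eval p (pderiv t g) = eval p v * eval p (pderiv t d) := by
      intro t; rw [hv, Derivation.leibniz]; simp [hd]
    have := (hl (eval p v) (-eval p u) (by
      funext t
      simp only [Pi.add_apply, Pi.smul_apply, smul_eq_mul, Pi.zero_apply, hf, hg]; ring)).2
    apply h0
    funext t
    have hu0 : eval p u = 0 := by simpa using this
    simp [hf, hu0])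
  have h0 := Ideal.mem_span_singleton.mp (hN 0)
  have h1 := Ideal.mem_span_singleton.mp (hN 1)
  exact X_relPrime (by decide) N h0 h1

/-- A vector parallel to `∇f` along the smooth curve `f = 0` is a multiple of `∇f` modulo `f`. -/
theorem grad_decomp {f : S} (hsm : ∀ p : Fin 3 → ℂ, (∀ t, eval p (pderiv t f) = 0) → p = 0)
    (hf0 : f ≠ 0) {n1 n2 n3 k1 k2 k3 : S}
    (h1 : n2 * pderiv 2 f - n3 * pderiv 1 f = f * k1)
    (h2 : n3 * pderiv 0 f - n1 * pderiv 2 f = f * k2)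
    (h3 : n1 * pderiv 1 f - n2 * pderiv 0 f = f * k3) :
    ∃ s x1 x2 x3, n1 = s * pderiv 0 f + f * x1 ∧ n2 = s * pderiv 1 f + f * x2 ∧
      n3 = s * pderiv 2 f + f * x3 := by
  obtain ⟨N, hN⟩ := X_pow_mem (Ideal.span {pderiv 0 f, pderiv 1 f, pderiv 2 f}) (by
    intro p hp
    by_contra! hcon
    refine hp (hsm p fun t => hcon _ (Ideal.subset_span ?_))
    fin_cases t <;> simp)
  have hN' : ∀ i, ∃ a b c, (X i : S) ^ N = a * pderiv 0 f + b * pderiv 1 f + c * pderiv 2 f := by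
    intro i
    obtain ⟨a, b, c, h⟩ := Submodule.mem_span_triple.mp (hN i)
    exact ⟨a, b, c, h.symm⟩
  obtain ⟨a1, a2, a3, ha⟩ := hN' 0
  obtain ⟨b1, b2, b3, hb⟩ := hN' 1
  obtain ⟨c1, c2, c3, hc⟩ := hN' 2
  obtain ⟨x1, x2, x3, e1, e2, e3⟩ := koszul_one (regTriple_X N) ha hb hc
    (n1 := k1) (n2 := k2) (n3 := k3) (by
      apply mul_left_cancel₀ hf0
      linear_combination -pderiv 0 f * h1 - pderiv 1 f * h2 - pderiv 2 f * h3)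
  obtain ⟨s, s1, s2, s3⟩ := koszul_two (regTriple_X N) ha hb
    (n1 := n1 + f * x1) (n2 := n2 + f * x2) (n3 := n3 + f * x3)
    (by linear_combination h1 + f * e1) (by linear_combination h2 + f * e2)
    (by linear_combination h3 + f * e3)
  exact ⟨s, -x1, -x2, -x3, by linear_combination s1, by linear_combination s2,
    by linear_combination s3⟩

/-- the Jacobian syzygy module `D₀(f)` vanishes in all degrees below `d−2`:
any `(a,b,c) ∈ D₀(f)` with components homogeneous of the same degree `jdeg < d−2` is zero. -/
theorem D0_vanishes_below_d_sub_two
    (m : ℕ) (hm : 4 ≤ m) (F : Fin m → S) (e : Fin m → ℕ)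
    (he : ∀ j, 1 ≤ e j)
    (hhom : ∀ j, (F j).IsHomogeneous (e j))
    (hsmooth : ∀ j, ∀ p : Fin 3 → ℂ,
      (∀ t, eval p (pderiv t (F j)) = 0) → p = 0)
    (hnc : ∀ i j : Fin m, i ≠ j → ∀ p : Fin 3 → ℂ, p ≠ 0 →
      eval p (F i) = 0 → eval p (F j) = 0 →
      LinearIndependent ℂ
        ![fun t => eval p (pderiv t (F i)), fun t => eval p (pderiv t (F j))])
    (htriple : ∀ i j k : Fin m, i ≠ j → i ≠ k → j ≠ k → ∀ p : Fin 3 → ℂ, p ≠ 0 →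
      ¬(eval p (F i) = 0 ∧ eval p (F j) = 0 ∧ eval p (F k) = 0))
    (jdeg : ℕ) (hjdeg : jdeg < (∑ i, e i) - 2)
    (v : Fin 3 → S) (hv : v ∈ D0 (∏ i, F i))
    (hvhom : ∀ t, (v t).IsHomogeneous jdeg) :
    v = 0 := by
  have hF0 : ∀ j, F j ≠ 0 := by
    intro j hj
    have := hsmooth j (fun _ => 1) (by intro t; rw [hj]; simp)
    exact one_ne_zero (congrFun this 0)
  have hrel : ∀ i k, i ≠ k → IsRelPrime (F i) (F k) := fun i k hik =>
    relPrime_of_transversal (hnc i k hik)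
  have hd0 : jdeg + 2 < ∑ i, e i := by omega
  -- the product of the other curves
  obtain ⟨P, hP⟩ : ∃ P : Fin m → S, ∀ i, P i = ∏ k ∈ Finset.univ.erase i, F k := ⟨_, fun _ => rfl⟩
  have hfP : ∀ i, ∏ k, F k = F i * P i := fun i => by
    rw [hP, Finset.mul_prod_erase _ _ (Finset.mem_univ i)]
  have hPhom : ∀ i, (P i).IsHomogeneous (∑ k ∈ Finset.univ.erase i, e k) := fun i => by
    rw [hP]; exact IsHomogeneous.prod _ _ _ (fun k _ => hhom k)
  have hesum : ∀ i, e i + ∑ k ∈ Finset.univ.erase i, e k = ∑ k, e k := fun i =>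
    Finset.add_sum_erase _ _ (Finset.mem_univ i)
  have hPrel : ∀ i, IsRelPrime (F i) (P i) := fun i => by
    rw [hP]; exact IsRelPrime.prod_right (fun k hk => hrel i k (Finset.ne_of_mem_erase hk).symm)
  have hv' : v 0 * pderiv 0 (∏ i, F i) + v 1 * pderiv 1 (∏ i, F i)
      + v 2 * pderiv 2 (∏ i, F i) = 0 := by
    have : ∑ t, v t * pderiv t (∏ i, F i) = 0 := hv
    rwa [Fin.sum_univ_three] at this
  have heuler : ∀ i, X 0 * pderiv 0 (F i) + X 1 * pderiv 1 (F i) + X 2 * pderiv 2 (F i)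
      = (e i : S) * F i := fun i => by
    have := (hhom i).sum_X_mul_pderiv
    rwa [Fin.sum_univ_three, nsmul_eq_mul] at this
  -- `θ` is logarithmic along each curve
  have hlog : ∀ i, ∃ l, v 0 * pderiv 0 (F i) + v 1 * pderiv 1 (F i) + v 2 * pderiv 2 (F i)
      = F i * l := by
    intro i
    apply (hPrel i).dvd_of_dvd_mul_left
    rw [hfP i] at hv'
    simp only [Derivation.leibniz, smul_eq_mul] at hv'
    exact ⟨-(v 0 * pderiv 0 (P i) + v 1 * pderiv 1 (P i) + v 2 * pderiv 2 (P i)), by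
      linear_combination hv'⟩
  obtain ⟨n1, hn1⟩ : ∃ n, n = v 1 * X 2 - v 2 * X 1 := ⟨_, rfl⟩
  obtain ⟨n2, hn2⟩ : ∃ n, n = v 2 * X 0 - v 0 * X 2 := ⟨_, rfl⟩
  obtain ⟨n3, hn3⟩ : ∃ n, n = v 0 * X 1 - v 1 * X 0 := ⟨_, rfl⟩
  have hn1h : n1.IsHomogeneous (jdeg + 1) := by
    rw [hn1]; exact ((hvhom 1).mul (isHomogeneous_X _ _)).sub ((hvhom 2).mul (isHomogeneous_X _ _))
  have hn2h : n2.IsHomogeneous (jdeg + 1) := by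
    rw [hn2]; exact ((hvhom 2).mul (isHomogeneous_X _ _)).sub ((hvhom 0).mul (isHomogeneous_X _ _))
  have hn3h : n3.IsHomogeneous (jdeg + 1) := by
    rw [hn3]; exact ((hvhom 0).mul (isHomogeneous_X _ _)).sub ((hvhom 1).mul (isHomogeneous_X _ _))
  have hdec : ∀ i, ∃ s x1 x2 x3, n1 = s * pderiv 0 (F i) + F i * x1 ∧
      n2 = s * pderiv 1 (F i) + F i * x2 ∧ n3 = s * pderiv 2 (F i) + F i * x3 := by
    intro i
    obtain ⟨l, hl⟩ := hlog i
    have he' := heuler i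
    apply grad_decomp (hsmooth i) (hF0 i) (k1 := l * X 0 - (e i : S) * v 0) (k2 := l * X 1 - (e i : S) * v 1)
      (k3 := l * X 2 - (e i : S) * v 2)
    · rw [hn2, hn3]; linear_combination X 0 * hl - v 0 * he'
    · rw [hn3, hn1]; linear_combination X 1 * hl - v 1 * he'
    · rw [hn1, hn2]; linear_combination X 2 * hl - v 2 * he'
  choose s x1 x2 x3 d1 d2 d3 using hdec
  -- vanishing of the residue at the nodes
  have hnode : ∀ i k, i ≠ k → s i ∈ Ideal.span {F i, F k} := by
    intro i k hik
    apply mem_span_pair_of_local (hF0 k) (hrel i k hik)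
    intro p hp
    by_contra! hcon
    have hi : eval p (F i) = 0 := hcon _ (Ideal.mul_mem_right _ _ (Ideal.subset_span (by simp)))
    have hk : eval p (F k) = 0 := hcon _ (Ideal.mul_mem_right _ _ (Ideal.subset_span (by simp)))
    have hl := hnc i k hik p hp hi hk
    rw [← crossProduct_ne_zero_iff_linearIndependent] at hl
    apply hl
    have m1 := hcon (pderiv 1 (F i) * pderiv 2 (F k) - pderiv 2 (F i) * pderiv 1 (F k)) (by
      rw [Ideal.mem_span_pair]
      refine ⟨-(x2 i * pderiv 2 (F k) - x3 i * pderiv 1 (F k)),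
        x2 k * pderiv 2 (F k) - x3 k * pderiv 1 (F k), ?_⟩
      linear_combination pderiv 2 (F k) * (d2 i - d2 k) - pderiv 1 (F k) * (d3 i - d3 k))
    have m2 := hcon (pderiv 2 (F i) * pderiv 0 (F k) - pderiv 0 (F i) * pderiv 2 (F k)) (by
      rw [Ideal.mem_span_pair]
      refine ⟨-(x3 i * pderiv 0 (F k) - x1 i * pderiv 2 (F k)),
        x3 k * pderiv 0 (F k) - x1 k * pderiv 2 (F k), ?_⟩
      linear_combination pderiv 0 (F k) * (d3 i - d3 k) - pderiv 2 (F k) * (d1 i - d1 k))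
    have m3 := hcon (pderiv 0 (F i) * pderiv 1 (F k) - pderiv 1 (F i) * pderiv 0 (F k)) (by
      rw [Ideal.mem_span_pair]
      refine ⟨-(x1 i * pderiv 1 (F k) - x2 i * pderiv 0 (F k)),
        x1 k * pderiv 1 (F k) - x2 k * pderiv 0 (F k), ?_⟩
      linear_combination pderiv 1 (F k) * (d1 i - d1 k) - pderiv 0 (F k) * (d2 i - d2 k))
    simp only [map_sub, map_mul] at m1 m2 m3
    rw [cross_apply]
    simp [m1, m2, m3]
  have hcancel : ∀ i k l, i ≠ k → i ≠ l → k ≠ l → ∀ w, w * F l ∈ Ideal.span {F i, F k} →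
      w ∈ Ideal.span {F i, F k} := by
    intro i k l hik hil hkl w hw
    apply mem_span_pair_of_local (hF0 k) (hrel i k hik)
    intro p hp
    by_contra! hcon
    exact htriple i k l hik hil hkl p hp
      ⟨hcon _ (Ideal.mul_mem_right _ _ (Ideal.subset_span (by simp))),
       hcon _ (Ideal.mul_mem_right _ _ (Ideal.subset_span (by simp))),
       hcon _ (by rwa [mul_comm])⟩
  have hcancelP : ∀ i k, i ≠ k → ∀ T : Finset (Fin m), i ∉ T → k ∉ T → ∀ w,
      w * ∏ l ∈ T, F l ∈ Ideal.span {F i, F k} → w ∈ Ideal.span {F i, F k} := by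
    intro i k hik T
    induction T using Finset.induction_on with
    | empty => intro _ _ w hw; simpa using hw
    | insert l T hl ih =>
      intro hi hk w hw
      rw [Finset.mem_insert, not_or] at hi hk
      rw [Finset.prod_insert hl, ← mul_assoc] at hw
      exact hcancel i k l hik hi.1 hk.1 w (ih hi.2 hk.2 _ hw)
  have hres : ∀ i, ∀ T : Finset (Fin m), i ∉ T → ∃ u w, s i = u * F i + w * ∏ l ∈ T, F l := by
    intro i T
    induction T using Finset.induction_on with
    | empty => intro _; exact ⟨0, s i, by simp⟩
    | insert k T hk ih =>
      intro hi
      rw [Finset.mem_insert, not_or] at hi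
      obtain ⟨u, w, huw⟩ := ih hi.2
      have hw : w ∈ Ideal.span {F i, F k} := by
        apply hcancelP i k hi.1 T hi.2 hk
        have : w * ∏ l ∈ T, F l = s i - u * F i := by rw [huw]; ring
        rw [this]
        exact Ideal.sub_mem _ (hnode i k hi.1) (Ideal.mul_mem_left _ _ (Ideal.subset_span (by simp)))
      rw [Ideal.mem_span_pair] at hw
      obtain ⟨a, b, hab⟩ := hw
      refine ⟨u + a * ∏ l ∈ T, F l, b, ?_⟩
      rw [Finset.prod_insert hk, huw, ← hab]; ring
  have hdeg : ∀ i t, (P i * pderiv t (F i)).IsHomogeneous ((∑ k, e k) - 1) := by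
    intro i t
    have := (hPhom i).mul ((hhom i).pderiv (i := t))
    have h1 := hesum i
    have h2 := he i
    convert this using 1
    omega
  have hdvd : ∀ i, F i ∣ n1 ∧ F i ∣ n2 ∧ F i ∣ n3 := by
    intro i
    obtain ⟨u, w, huw⟩ := hres i (Finset.univ.erase i) (Finset.notMem_erase _ _)
    rw [← hP] at huw
    refine ⟨dvd_of_low_degree (u := w) (r := u * pderiv 0 (F i) + x1 i) hn1h (hhom i) (hdeg i 0) (by omega) ?_,
      dvd_of_low_degree (u := w) (r := u * pderiv 1 (F i) + x2 i) hn2h (hhom i) (hdeg i 1) (by omega) ?_,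
      dvd_of_low_degree (u := w) (r := u * pderiv 2 (F i) + x3 i) hn3h (hhom i) (hdeg i 2) (by omega) ?_⟩
    · linear_combination d1 i + pderiv 0 (F i) * huw
    · linear_combination d2 i + pderiv 1 (F i) * huw
    · linear_combination d3 i + pderiv 2 (F i) * huw
  have hfhom : (∏ i, F i).IsHomogeneous (∑ i, e i) := IsHomogeneous.prod _ _ _ (fun k _ => hhom k)
  have hall : ∀ n : S, n.IsHomogeneous (jdeg + 1) → (∀ i, F i ∣ n) → n = 0 := by
    intro n hn hdv
    refine eq_zero_of_dvd_low hn hfhom (by omega) ?_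
    exact Finset.prod_dvd_of_isRelPrime (fun i _ k _ hik => hrel i k hik) (fun i _ => hdv i)
  have z1 := hall n1 hn1h (fun i => (hdvd i).1)
  have z2 := hall n2 hn2h (fun i => (hdvd i).2.1)
  have z3 := hall n3 hn3h (fun i => (hdvd i).2.2)
  rw [hn1] at z1
  rw [hn2] at z2
  rw [hn3] at z3
  have hE : X 0 * pderiv 0 (∏ i, F i) + X 1 * pderiv 1 (∏ i, F i) + X 2 * pderiv 2 (∏ i, F i)
      = ((∑ i, e i : ℕ) : S) * ∏ i, F i := by
    have := hfhom.sum_X_mul_pderiv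
    rwa [Fin.sum_univ_three, nsmul_eq_mul] at this
  have hne : ((∑ i, e i : ℕ) : S) * ∏ i, F i ≠ 0 :=
    mul_ne_zero (Nat.cast_ne_zero.mpr (by omega)) (Finset.prod_ne_zero_iff.mpr fun i _ => hF0 i)
  have c0 : v 0 = 0 := by
    apply (mul_eq_zero.mp (?_ : v 0 * (((∑ i, e i : ℕ) : S) * ∏ i, F i) = 0)).resolve_right hne
    rw [← hE]
    linear_combination X 0 * hv' + pderiv 1 (∏ i, F i) * z3 - pderiv 2 (∏ i, F i) * z2
  have c1 : v 1 = 0 := by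
    apply (mul_eq_zero.mp (?_ : v 1 * (((∑ i, e i : ℕ) : S) * ∏ i, F i) = 0)).resolve_right hne
    rw [← hE]
    linear_combination X 1 * hv' - pderiv 0 (∏ i, F i) * z3 + pderiv 2 (∏ i, F i) * z1
  have c2 : v 2 = 0 := by
    apply (mul_eq_zero.mp (?_ : v 2 * (((∑ i, e i : ℕ) : S) * ∏ i, F i) = 0)).resolve_right hne
    rw [← hE]
    linear_combination X 2 * hv' + pderiv 0 (∏ i, F i) * z2 - pderiv 1 (∏ i, F i) * z1
  funext t
  fin_cases t
  · exact c0
  · exact c1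
  · exact c2
end
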